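/- For every p < 1/2, the critical colouring densities of the DaC model on the square lattice satisfy r_c(p) + r_c*(p) ≥ 1. -/

import Mathlib

/-!
Common definitions for the Divide-and-Colour (DaC) model of
Bálint, Camia and Meester, "Sharp phase transition and critical
behaviour in 2D divide and colour models".

The model is built concretely: a single uniform random variable on `(0,1]`
is decomposed into countably many i.i.d. uniform random variables (via its
binary digits); one family of uniforms drives the Bernoulli(p) bond
percolation (the edge configuration), and an independent family of uniforms
attaches an independent Bernoulli(r) colour to each bond cluster (the colour
of a cluster is determined by the uniform label of its canonical
representative, the vertex of minimal encoding).  The DaC measure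
`ℙ_{p,r}` is the pushforward of Lebesgue measure on `(0,1]` under the map
producing the pair (edge configuration, colour configuration).
-/

open MeasureTheory ENNReal

namespace DaC

/-- Vertices of the lattice. -/
abbrev V : Type := ℤ × ℤ

/-- Square lattice adjacency: Euclidean distance `1`. -/
def SqAdj (u v : V) : Prop := (u.1 - v.1) ^ 2 + (u.2 - v.2) ^ 2 = 1

/-- `*`-adjacency (matching graph of the square lattice):
Euclidean distance `1` or `√2`. -/
def StarAdj (u v : V) : Prop :=
  (u.1 - v.1) ^ 2 + (u.2 - v.2) ^ 2 = 1 ∨ (u.1 - v.1) ^ 2 + (u.2 - v.2) ^ 2 = 2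

/-- Triangular lattice adjacency. -/
def TriAdj (u v : V) : Prop :=
  (u.1 - v.1, u.2 - v.2) ∈
    ({(1, 0), (-1, 0), (0, 1), (0, -1), (1, 1), (-1, -1)} : Set (ℤ × ℤ))

/-- Classical indicator of a proposition, as a boolean. -/
noncomputable def boolOf (P : Prop) : Bool := @decide P (Classical.propDecidable P)

/-- The `n`-th binary digit of a real number `x ∈ (0,1]`. -/
noncomputable def bit (n : ℕ) (x : ℝ) : Bool := boolOf (⌊x * 2 ^ (n + 1)⌋ % 2 = 1)

/-- A countable family of i.i.d. uniform random variables on `[0,1]`, extracted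
from a single uniform sample `x` by splitting its binary digits. -/
noncomputable def unif (i : ℕ) (x : ℝ) : ℝ :=
  ∑' k : ℕ, if bit (Nat.pair i k) x then ((2 : ℝ)⁻¹) ^ (k + 1) else 0

/-- A symmetric encoding of (unordered) pairs of vertices. -/
noncomputable def eIdx (u v : V) : ℕ :=
  min (Encodable.encode (u, v)) (Encodable.encode (v, u))

/-- The uniform label attached to the edge `{u,v}`. -/
noncomputable def edgeU (u v : V) (x : ℝ) : ℝ := unif (2 * eIdx u v) x

/-- The uniform label attached to the vertex `v` (independent of the edge labels). -/
noncomputable def vtxU (v : V) (x : ℝ) : ℝ := unif (2 * Encodable.encode v + 1) x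

/-- Edge configurations: a boolean (open/closed) for each (ordered) pair of
vertices; configurations arising from the model are symmetric and are
supported on pairs of adjacent vertices. -/
abbrev EdgeCfg : Type := V → V → Bool

/-- Colour configurations: a colour (black = `true`, white = `false`) for each vertex. -/
abbrev ColourCfg : Type := V → Bool

/-- Full configurations of the DaC model: an edge configuration together with
a colour configuration. -/
abbrev Config : Type := EdgeCfg × ColourCfg

/-- The Bernoulli(p) edge configuration determined by the uniform sample `x`,
on the lattice with adjacency `adj`: an edge `{u,v}` of the lattice is open
iff its uniform label is `< p`. -/
noncomputable def edgeCfg (adj : V → V → Prop) (p : ℝ) (x : ℝ) : EdgeCfg :=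
  fun u v => boolOf (adj u v) && boolOf (edgeU u v x < p)

/-- Connectivity through open edges of the edge configuration `η`. -/
def Conn (η : EdgeCfg) (u v : V) : Prop :=
  Relation.ReflTransGen (fun a b => η a b = true) u v

/-- The `p`-cluster of the vertex `v`: its connected component in the graph
retaining only open edges. -/
def pCluster (η : EdgeCfg) (v : V) : Set V := {w | Conn η v w}

/-- Canonical representative of the `p`-cluster of `v`: the vertex of the
cluster with minimal encoding. -/
noncomputable def clusterRep (η : EdgeCfg) (v : V) : V :=
  (Encodable.decode (α := V) (sInf (Encodable.encode '' pCluster η v))).getD v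

/-- The colour configuration with parameters `p, r` determined by the uniform
sample `x`: every `p`-cluster is coloured black (with probability `r`)
or white, independently of all other `p`-clusters, according to the uniform
label of its canonical representative. -/
noncomputable def colourCfg (adj : V → V → Prop) (p r : ℝ) (x : ℝ) : ColourCfg :=
  fun v => boolOf (vtxU (clusterRep (edgeCfg adj p x) v) x < r)

/-- The uniform sample: Lebesgue measure on `(0,1]`. -/
noncomputable def base : Measure ℝ := volume.restrict (Set.Ioc 0 1)

/-- `ν_p`: the product Bernoulli(p) measure on edge configurations of the
lattice with adjacency `adj`. -/
noncomputable def edgeMeasure (adj : V → V → Prop) (p : ℝ) : Measure EdgeCfg :=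
  base.map (edgeCfg adj p)

/-- `ℙ_{p,r}`: the DaC measure on pairs (edge configuration, colour
configuration) for the lattice with adjacency `adj`. -/
noncomputable def DaCMeasure (adj : V → V → Prop) (p r : ℝ) : Measure Config :=
  base.map (fun x => (edgeCfg adj p x, colourCfg adj p r x))

/-- Monochromatic connectivity: `u` and `v` are joined by a path (for the
adjacency `adj`) all of whose vertices have colour `c`. -/
def MonoConn (adj : V → V → Prop) (ξ : ColourCfg) (c : Bool) (u v : V) : Prop :=
  Relation.ReflTransGen (fun a b => adj a b ∧ ξ a = c ∧ ξ b = c) u v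

/-- The colour-`c` cluster of `v` (for the adjacency `adj`): empty if `v` does
not have colour `c`, and otherwise the maximal `adj`-connected set of
`c`-coloured vertices containing `v`. -/
def monoCluster (adj : V → V → Prop) (ξ : ColourCfg) (c : Bool) (v : V) : Set V :=
  {w | ξ v = c ∧ MonoConn adj ξ c v w}

/-- The origin. -/
def origin : V := (0, 0)

/-- The size (cardinality) of a set of vertices, with values in `ℝ≥0∞`. -/
noncomputable def sizeE (S : Set V) : ℝ≥0∞ := S.encard

/-- The probability, under the DaC measure with edge adjacency `eadj` and
parameters `p, r`, that the origin lies in an infinite colour-`c` cluster for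
the adjacency `cadj`. -/
noncomputable def percProb (eadj cadj : V → V → Prop) (c : Bool) (p r : ℝ) : ℝ≥0∞ :=
  DaCMeasure eadj p r {ω | (monoCluster cadj ω.2 c origin).Infinite}

/-- `Θ(p,r)` for the square lattice: probability that the origin lies in an
infinite black `r`-cluster. -/
noncomputable def thetaSq (p r : ℝ) : ℝ≥0∞ := percProb SqAdj SqAdj true p r

/-- `Θ*(p,s)` for the square lattice: the `ℙ_{p,1-s}`-probability that the
origin lies in an infinite white `*`-cluster. -/
noncomputable def thetaStarSq (p s : ℝ) : ℝ≥0∞ := percProb SqAdj StarAdj false p (1 - s)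

/-- `Θ(p,r)` for the triangular lattice. -/
noncomputable def thetaTri (p r : ℝ) : ℝ≥0∞ := percProb TriAdj TriAdj true p r

/-- The critical colouring density `r_c(p)` of the square lattice DaC model. -/
noncomputable def rcSq (p : ℝ) : ℝ :=
  sSup {r : ℝ | r ∈ Set.Icc (0 : ℝ) 1 ∧ thetaSq p r = 0}

/-- The critical colouring density `r_c*(p)` for white `*`-percolation. -/
noncomputable def rcStarSq (p : ℝ) : ℝ :=
  sSup {s : ℝ | s ∈ Set.Icc (0 : ℝ) 1 ∧ thetaStarSq p s = 0}

/-- The critical colouring density `r_c(p)` of the triangular lattice DaC model. -/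
noncomputable def rcTri (p : ℝ) : ℝ :=
  sSup {r : ℝ | r ∈ Set.Icc (0 : ℝ) 1 ∧ thetaTri p r = 0}

/-! ### Rectangles and crossings -/

/-- The rectangle `S_{n,m} = ([0,n] × [0,m]) ∩ ℤ²`. -/
def Rect (n m : ℕ) : Set V :=
  {v | 0 ≤ v.1 ∧ v.1 ≤ (n : ℤ) ∧ 0 ≤ v.2 ∧ v.2 ≤ (m : ℤ)}

/-- The top side of `S_{n,m}`. -/
def TopSide (n m : ℕ) : Set V := {v | v ∈ Rect n m ∧ v.2 = (m : ℤ)}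

/-- The bottom side of `S_{n,m}`. -/
def BotSide (n m : ℕ) : Set V := {v | v ∈ Rect n m ∧ v.2 = 0}

/-- The left side of `S_{n,m}`. -/
def LeftSide (n m : ℕ) : Set V := {v | v ∈ Rect n m ∧ v.1 = 0}

/-- The right side of `S_{n,m}`. -/
def RightSide (n m : ℕ) : Set V := {v | v ∈ Rect n m ∧ v.1 = (n : ℤ)}

/-- There is a path (for the adjacency `adj`), all of whose vertices lie in the
region `R` and satisfy the predicate `good`, from the set `A` to the set `B`. -/
def HasCrossing (adj : V → V → Prop) (good : V → Prop) (R A B : Set V) : Prop :=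
  ∃ (k : ℕ) (f : Fin (k + 1) → V),
    (∀ i, f i ∈ R ∧ good (f i)) ∧
    (∀ i : Fin k, adj (f i.castSucc) (f i.succ)) ∧
    f 0 ∈ A ∧ f (Fin.last k) ∈ B

/-- `V^b_{n,m}` as a set of colour configurations: there is a black vertical
crossing of `S_{n,m}` (for the adjacency `adj`). -/
def VertBC (adj : V → V → Prop) (n m : ℕ) : Set ColourCfg :=
  {ξ | HasCrossing adj (fun v => ξ v = true) (Rect n m) (TopSide n m) (BotSide n m)}

/-- `V^{w*}_{n,m}` as a set of colour configurations: there is a white vertical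
`*`-crossing of `S_{n,m}`. -/
def VertWStarC (n m : ℕ) : Set ColourCfg :=
  {ξ | HasCrossing StarAdj (fun v => ξ v = false) (Rect n m) (TopSide n m) (BotSide n m)}

/-- `H^{w*}_{n,m}` as a set of colour configurations: there is a white
horizontal `*`-crossing of `S_{n,m}`. -/
def HorizWStarC (n m : ℕ) : Set ColourCfg :=
  {ξ | HasCrossing StarAdj (fun v => ξ v = false) (Rect n m) (LeftSide n m) (RightSide n m)}

/-- The event (set of full configurations) determined by a set of colour
configurations. -/
def colourEvent (C : Set ColourCfg) : Set Config := {ω | ω.2 ∈ C}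

/-! ### Events depending on colours, increasing events, pivotal clusters -/

/-- The event `A` is defined in terms of the colours of the vertices in `W`. -/
def DependsOnColoursIn (A : Set Config) (W : Set V) : Prop :=
  ∀ ω ω' : Config, (∀ v ∈ W, ω.2 v = ω'.2 v) → (ω ∈ A ↔ ω' ∈ A)

/-- The event `A` is increasing (for the partial order comparing colour
configurations pointwise, black = `true` above white = `false`). -/
def IncreasingColourEvent (A : Set Config) : Prop :=
  ∀ ω ω' : Config, (∀ v : V, ω.2 v = true → ω'.2 v = true) → ω ∈ A → ω' ∈ A

/-- Flip the colours of the vertices of `C`. -/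
noncomputable def flipOn (C : Set V) (ξ : ColourCfg) : ColourCfg :=
  fun v => @ite _ (v ∈ C) (Classical.propDecidable _) (!ξ v) (ξ v)

/-- The set `C` is a pivotal `p`-cluster for the event `A` in the
configuration `ω`: `C` is a `p`-cluster of the edge configuration of `ω`, and
flipping the colour of (all the vertices of) `C` changes whether the
configuration belongs to `A`. -/
def IsPivotal (A : Set Config) (ω : Config) (C : Set V) : Prop :=
  (∃ v : V, C = pCluster ω.1 v) ∧ ¬ (ω ∈ A ↔ (ω.1, flipOn C ω.2) ∈ A)

/-- `n(A)`: the number of pivotal `p`-clusters for the event `A`, with values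
in `ℝ≥0∞`. -/
noncomputable def numPivotal (A : Set Config) (ω : Config) : ℝ≥0∞ :=
  {C : Set V | IsPivotal A ω C}.encard

/-! ### Barriers -/

/-- Connectivity in the square lattice avoiding the edges of `E`. -/
def AvoidConn (E : Set (V × V)) (u v : V) : Prop :=
  Relation.ReflTransGen (fun a b => SqAdj a b ∧ (a, b) ∉ E ∧ (b, a) ∉ E) u v

/-- `E` is a barrier: a set of edges of the square lattice whose removal
(keeping the end-vertices) separates `ℤ²` into two or more connected
components, exactly one of which is infinite. -/
def IsBarrier (E : Set (V × V)) : Prop :=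
  (∀ e ∈ E, SqAdj e.1 e.2) ∧
  (∃ v, {w | AvoidConn E v w}.Infinite) ∧
  (∀ v w, {x | AvoidConn E v x}.Infinite → {x | AvoidConn E w x}.Infinite → AvoidConn E v w) ∧
  (∃ v, {w | AvoidConn E v w}.Finite)

/-- The exterior of a barrier: its unique infinite complementary component. -/
def barrierExt (E : Set (V × V)) : Set V := {v | {w | AvoidConn E v w}.Infinite}

/-- The interior of a barrier: the union of the finite complementary components. -/
def barrierInt (E : Set (V × V)) : Set V := {v | {w | AvoidConn E v w}.Finite}

/-- The event `A ⊆ EdgeCfg` is increasing (opening edges preserves it). -/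
def IncreasingEdgeEvent (A : Set EdgeCfg) : Prop :=
  ∀ η η' : EdgeCfg, (∀ a b : V, η a b = true → η' a b = true) → η ∈ A → η' ∈ A

/-- The event `A ⊆ EdgeCfg` depends only on the states of the edges both of
whose endpoints lie in `W`. -/
def DependsOnEdgesIn (A : Set EdgeCfg) (W : Set V) : Prop :=
  ∀ η η' : EdgeCfg, (∀ a b : V, a ∈ W → b ∈ W → η a b = η' a b) → (η ∈ A ↔ η' ∈ A)

/-! ### Translations -/

/-- Translation of configurations by the vector `u`. -/
def shift (u : V) (ω : Config) : Config :=
  (fun a b => ω.1 (a + u) (b + u), fun a => ω.2 (a + u))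

end DaC

namespace DaC

/-!
If `r` lay strictly between `r_c(p)` and `1 - r_c*(p)`, then black nearest-neighbour percolation and
white `*`-percolation would both have positive probability at colour density `r`. They exclude each
other for `p ≤ 1 / 2`.

* The law of the black pairs, like that of the open bonds, is invariant under the automorphisms of
  the lattice and positively associated. Association comes from revealing the labels of vertices and
  bonds one at a time, in an order for which the effect of each label on the colours has a definite
  sign: the next bond is one at the cluster with the least representative, and opening it can only
  extend the colour of that cluster, which is already determined.
* For such a law, an infinite cluster forces connections between distant boxes, and gluing these
  with the FKG inequality and the reflections of the square yields circuits in annuli at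
  arbitrarily large scales with positive probability.
* For the open bonds with parameter at most `1 / 2`, a circuit of open bonds surrounds the clusters
  of the dual model, which is at least as well connected; the 0–1 law therefore excludes infinite
  clusters of open bonds (Harris).
* All clusters of open bonds being finite, changing finitely many labels changes finitely many
  colours, so white `*`-percolation also obeys a 0–1 law. If it had positive probability it would
  be almost sure, contradicting the black circuits.
-/

section Walks

variable {α : Type*} {R : α → α → Prop} {f : ℕ → α} {n : ℕ}

/-- The first `n` steps of the sequence `f` are steps of the relation `R`. -/
def IsWalk (R : α → α → Prop) (f : ℕ → α) (n : ℕ) : Prop := ∀ i < n, R (f i) (f (i + 1))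

lemma IsWalk.mono {R' : α → α → Prop} (h : ∀ a b, R a b → R' a b) (hf : IsWalk R f n) :
    IsWalk R' f n :=
  fun i hi => h _ _ (hf i hi)

lemma IsWalk.reflTransGen (hf : IsWalk R f n) {i j : ℕ} (hij : i ≤ j) (hj : j ≤ n) :
    Relation.ReflTransGen R (f i) (f j) :=
  reflTransGen_of_succ_of_le (fun a b => R (f a) (f b))
    (fun k hk => hf k (hk.2.trans_le hj)) hij |>.lift f fun _ _ h => h

lemma exists_isWalk_of_reflTransGen {u v : α} (h : Relation.ReflTransGen R u v) :
    ∃ (n : ℕ) (f : ℕ → α), IsWalk R f n ∧ f 0 = u ∧ f n = v := by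
  induction h using Relation.ReflTransGen.head_induction_on with
  | refl => exact ⟨0, fun _ => v, fun _ hi => absurd hi (Nat.not_lt_zero _), rfl, rfl⟩
  | @head a b hab _ ih =>
    obtain ⟨n, f, hf, rfl, hn⟩ := ih
    refine ⟨n + 1, fun i => Nat.casesOn i a f, fun i hi => ?_, rfl, hn⟩
    cases i with
    | zero => exact hab
    | succ k => exact hf k (by omega)

end Walks

/-! ### The square lattice, its matching graph and its dual -/

lemma sq_add_sq_le_two {x y : ℤ} (h : x ^ 2 + y ^ 2 ≤ 2) :
    (-1 ≤ x ∧ x ≤ 1) ∧ -1 ≤ y ∧ y ≤ 1 := by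
  refine ⟨⟨?_, ?_⟩, ?_, ?_⟩ <;> nlinarith [sq_nonneg x, sq_nonneg y]

lemma sqAdj_iff {a b : V} :
    SqAdj a b ↔ (a.1 = b.1 ∧ (b.2 = a.2 + 1 ∨ a.2 = b.2 + 1)) ∨
      (a.2 = b.2 ∧ (b.1 = a.1 + 1 ∨ a.1 = b.1 + 1)) := by
  obtain ⟨x, hx⟩ : ∃ x, a.1 = b.1 + x := ⟨a.1 - b.1, by ring⟩
  obtain ⟨y, hy⟩ : ∃ y, a.2 = b.2 + y := ⟨a.2 - b.2, by ring⟩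
  simp only [SqAdj, hx, hy, add_sub_cancel_left]
  constructor
  · intro h
    obtain ⟨⟨_, _⟩, _, _⟩ := sq_add_sq_le_two (h.le.trans one_le_two)
    interval_cases x <;> interval_cases y <;> omega
  · rintro (⟨h, h' | h'⟩ | ⟨h, h' | h'⟩)
    · obtain ⟨rfl, rfl⟩ : x = 0 ∧ y = -1 := by omega
      rfl
    · obtain ⟨rfl, rfl⟩ : x = 0 ∧ y = 1 := by omega
      rfl
    · obtain ⟨rfl, rfl⟩ : x = -1 ∧ y = 0 := by omega
      rfl
    · obtain ⟨rfl, rfl⟩ : x = 1 ∧ y = 0 := by omega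
      rfl

lemma starAdj_iff {a b : V} :
    StarAdj a b ↔ (a.1 ≤ b.1 + 1 ∧ b.1 ≤ a.1 + 1) ∧ (a.2 ≤ b.2 + 1 ∧ b.2 ≤ a.2 + 1) ∧
      (a.1 ≠ b.1 ∨ a.2 ≠ b.2) := by
  obtain ⟨x, hx⟩ : ∃ x, a.1 = b.1 + x := ⟨a.1 - b.1, by ring⟩
  obtain ⟨y, hy⟩ : ∃ y, a.2 = b.2 + y := ⟨a.2 - b.2, by ring⟩
  simp only [StarAdj, hx, hy, add_sub_cancel_left]
  constructor
  · intro h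
    obtain ⟨⟨_, _⟩, _, _⟩ := sq_add_sq_le_two (x := x) (y := y) (by omega)
    interval_cases x <;> interval_cases y <;> omega
  · rintro ⟨⟨_, _⟩, ⟨_, _⟩, h⟩
    have hx' : -1 ≤ x ∧ x ≤ 1 := by omega
    have hy' : -1 ≤ y ∧ y ≤ 1 := by omega
    obtain ⟨_, _⟩ := hx'
    obtain ⟨_, _⟩ := hy'
    interval_cases x <;> interval_cases y <;> omega

lemma SqAdj.symm {a b : V} (h : SqAdj a b) : SqAdj b a := by
  rw [sqAdj_iff] at h ⊢
  omega

/-- Bonds of the square lattice, named by their lower left endpoint `v` and their orientation: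
`(v, false)` is the horizontal bond from `v` to `v + (1, 0)`, and `(v, true)` is the vertical bond
from `v` to `v + (0, 1)`. -/
abbrev Bond : Type := V × Bool

/-- The bond joining two adjacent vertices. -/
def bondOf (u v : V) : Bond := ((min u.1 v.1, min u.2 v.2), decide (u.1 = v.1))

/-- The bond crossed by the dual bond `e`, where the pair `(x, y)`, read as a dual vertex,
stands for the point `(x + 1/2, y + 1/2)`. -/
def dualBond (e : Bond) : Bond :=
  if e.2 then ((e.1.1, e.1.2 + 1), false) else ((e.1.1 + 1, e.1.2), true)

lemma bondOf_comm (u v : V) : bondOf u v = bondOf v u := by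
  simp only [bondOf, min_comm, eq_comm]

lemma bondOf_right (x y : ℤ) : bondOf (x, y) (x + 1, y) = ((x, y), false) := by
  simp [bondOf]

lemma bondOf_up (x y : ℤ) : bondOf (x, y) (x, y + 1) = ((x, y), true) := by
  simp [bondOf]

/-! ### Parity of crossings -/

section Parity

variable {f g : ℕ → V} {n l : ℕ} {x y : ℤ}

/-- The indicator modulo `2` of the event that the step from `a` to `b` crosses the vertical ray
going down from the dual vertex `(x, y)`. -/
def rayCrossing (x y : ℤ) (a b : V) : ZMod 2 :=
  if (a.1 = x ∧ b.1 = x + 1 ∨ a.1 = x + 1 ∧ b.1 = x) ∧ a.2 ≤ y then 1 else 0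

/-- The number modulo `2` of times that the walk `f 0, …, f n`, prolonged to the left of `f 0`
and to the right of `f n` by horizontal half-lines, crosses the vertical ray going down from the
dual vertex `(x, y)`: it is `1` above the prolonged walk and `0` below it. -/
def crossingParity (f : ℕ → V) (n : ℕ) (x y : ℤ) : ZMod 2 :=
  ∑ i ∈ Finset.range n, rayCrossing x y (f i) (f (i + 1)) +
    ((if x < (f 0).1 ∧ (f 0).2 ≤ y then 1 else 0) + if (f n).1 ≤ x ∧ (f n).2 ≤ y then 1 else 0)

lemma sum_range_add_succ {A : Type*} [AddCommGroup A] (hA : ∀ a : A, a + a = 0) (F : ℕ → A)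
    (n : ℕ) : ∑ i ∈ Finset.range n, (F i + F (i + 1)) = F 0 + F n := by
  have hsub : ∀ a b : A, a + b = b - a := fun a b => by
    rw [sub_eq_add_neg, ← eq_neg_of_add_eq_zero_left (hA a), add_comm]
  simp only [hsub, Finset.sum_range_sub]

lemma crossingParity_succ_left (hf : IsWalk SqAdj f n)
    (hne : ∀ i < n, bondOf (f i) (f (i + 1)) ≠ ((x + 1, y), true)) :
    crossingParity f n x y = crossingParity f n (x + 1) y := by
  set column : V → ZMod 2 := fun a => if a.1 = x + 1 ∧ a.2 ≤ y then 1 else 0 with hcolumn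
  have hstep : ∀ i ∈ Finset.range n, rayCrossing x y (f i) (f (i + 1)) +
      rayCrossing (x + 1) y (f i) (f (i + 1)) = column (f i) + column (f (i + 1)) := by
    intro i hi
    have hadj := sqAdj_iff.1 (hf i (Finset.mem_range.1 hi))
    have hbond := hne i (Finset.mem_range.1 hi)
    simp only [bondOf, ne_eq, Prod.mk.injEq, decide_eq_true_eq] at hbond
    simp only [hcolumn, rayCrossing]
    split_ifs <;> first | rfl | omega
  have hsum := (Finset.sum_congr rfl hstep).trans
    (sum_range_add_succ CharTwo.add_self_eq_zero (fun i => column (f i)) n)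
  rw [Finset.sum_add_distrib] at hsum
  have hleft : (if x < (f 0).1 ∧ (f 0).2 ≤ y then 1 else 0) +
      (if x + 1 < (f 0).1 ∧ (f 0).2 ≤ y then 1 else 0) = column (f 0) := by
    simp only [hcolumn]
    split_ifs <;> first | rfl | omega
  have hright : (if (f n).1 ≤ x ∧ (f n).2 ≤ y then 1 else 0) +
      (if (f n).1 ≤ x + 1 ∧ (f n).2 ≤ y then 1 else 0) = column (f n) := by
    simp only [hcolumn]
    split_ifs <;> first | rfl | omega
  rw [← CharTwo.add_eq_zero, crossingParity, crossingParity]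
  linear_combination hsum + hleft + hright + CharTwo.add_self_eq_zero (column (f 0)) +
    CharTwo.add_self_eq_zero (column (f n))

lemma crossingParity_succ_right (hf : IsWalk SqAdj f n)
    (hne : ∀ i < n, bondOf (f i) (f (i + 1)) ≠ ((x, y + 1), false))
    (hleft : ¬(x < (f 0).1 ∧ (f 0).2 = y + 1)) (hright : ¬((f n).1 ≤ x ∧ (f n).2 = y + 1)) :
    crossingParity f n x y = crossingParity f n x (y + 1) := by
  unfold crossingParity
  congr 1
  · refine Finset.sum_congr rfl fun i hi => ?_
    have hadj := sqAdj_iff.1 (hf i (Finset.mem_range.1 hi))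
    have hbond := hne i (Finset.mem_range.1 hi)
    simp only [bondOf, ne_eq, Prod.mk.injEq, decide_eq_false_iff_not] at hbond
    unfold rayCrossing
    split_ifs <;> first | rfl | omega
  · congr 1 <;> split_ifs <;> first | rfl | omega

lemma crossingParity_eq_one (hf : IsWalk SqAdj f n) (hy : ∀ i ≤ n, (f i).2 ≤ y) :
    crossingParity f n x y = 1 := by
  set leftOf : V → ZMod 2 := fun a => if a.1 ≤ x then 1 else 0 with hleftOf
  have hstep : ∀ i ∈ Finset.range n,
      rayCrossing x y (f i) (f (i + 1)) = leftOf (f i) + leftOf (f (i + 1)) := by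
    intro i hi
    have hadj := sqAdj_iff.1 (hf i (Finset.mem_range.1 hi))
    have hi' := hy i (Finset.mem_range.1 hi).le
    simp only [hleftOf, rayCrossing]
    split_ifs <;> first | rfl | omega
  rw [crossingParity, Finset.sum_congr rfl hstep,
    sum_range_add_succ CharTwo.add_self_eq_zero (fun i => leftOf (f i))]
  have h0 := hy 0 n.zero_le
  have hn := hy n le_rfl
  simp only [hleftOf, h0, hn, and_true]
  split_ifs <;> first | rfl | omega

lemma crossingParity_eq_zero (hy : ∀ i ≤ n, y < (f i).2) : crossingParity f n x y = 0 := by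
  have h0 := hy 0 n.zero_le
  have hn := hy n le_rfl
  rw [crossingParity, Finset.sum_eq_zero fun i hi => ?_, if_neg (by omega), if_neg (by omega)]
  · rfl
  · have := hy i (Finset.mem_range.1 hi).le
    exact if_neg (by omega)

lemma crossingParity_eq_of_sqAdj (hf : IsWalk SqAdj f n) {d d' : V} (hd : SqAdj d d')
    (hne : ∀ i < n, bondOf (f i) (f (i + 1)) ≠ dualBond (bondOf d d'))
    (hleft : (f 0).1 ≤ d.1) (hright : d.1 < (f n).1) :
    crossingParity f n d.1 d.2 = crossingParity f n d'.1 d'.2 := by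
  obtain ⟨x, y⟩ := d
  obtain ⟨x', y'⟩ := d'
  dsimp only at hleft hright ⊢
  rcases sqAdj_iff.1 hd with ⟨hx, hy | hy⟩ | ⟨hy, hx | hx⟩ <;> dsimp only at hx hy
  · subst hx hy
    rw [bondOf_up] at hne
    exact crossingParity_succ_right hf hne (by omega) (by omega)
  · subst hx hy
    rw [bondOf_comm, bondOf_up] at hne
    exact (crossingParity_succ_right (x := x) (y := y') hf hne (by omega) (by omega)).symm
  · subst hx hy
    rw [bondOf_right] at hne
    exact crossingParity_succ_left hf hne
  · subst hx hy
    rw [bondOf_comm, bondOf_right] at hne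
    exact (crossingParity_succ_left hf hne).symm

lemma eq_of_bondOf_eq_horizontal {a b : V} (h : bondOf a b = ((x, y), false)) (hab : SqAdj a b) :
    (a = (x, y) ∧ b = (x + 1, y)) ∨ (a = (x + 1, y) ∧ b = (x, y)) := by
  have := sqAdj_iff.1 hab
  simp only [bondOf, Prod.mk.injEq, decide_eq_false_iff_not] at h
  simp only [Prod.ext_iff]
  omega

lemma eq_of_bondOf_eq_vertical {a b : V} (h : bondOf a b = ((x, y), true)) (hab : SqAdj a b) :
    (a = (x, y) ∧ b = (x, y + 1)) ∨ (a = (x, y + 1) ∧ b = (x, y)) := by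
  have := sqAdj_iff.1 hab
  simp only [bondOf, Prod.mk.injEq, decide_eq_true_eq] at h
  simp only [Prod.ext_iff]
  omega

lemma crossingParity_eq_of_corner (hf : IsWalk SqAdj f n) {v : V} (hv : ∀ i ≤ n, f i ≠ v)
    (hleft : (f 0).1 ≤ v.1) (hright : v.1 ≤ (f n).1) (hx : x = v.1 ∨ x + 1 = v.1)
    (hy : y = v.2 ∨ y + 1 = v.2) : crossingParity f n x y = crossingParity f n v.1 v.2 := by
  have hside : ∀ a b, a + 1 = v.1 → b = v.2 ∨ b + 1 = v.2 →
      crossingParity f n a b = crossingParity f n v.1 b := by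
    intro a b ha hb
    rw [← ha]
    refine crossingParity_succ_left hf fun i hi he => ?_
    rcases eq_of_bondOf_eq_vertical he (hf i hi) with ⟨h, h'⟩ | ⟨h', h⟩ <;> rcases hb with hb | hb
    · exact hv i hi.le (h.trans (Prod.ext ha hb))
    · exact hv (i + 1) hi (h'.trans (Prod.ext ha hb))
    · exact hv (i + 1) hi (h.trans (Prod.ext ha hb))
    · exact hv i hi.le (h'.trans (Prod.ext ha hb))
  have hbelow : ∀ b, b + 1 = v.2 → crossingParity f n v.1 b = crossingParity f n v.1 v.2 := by
    rintro b hb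
    rw [← hb]
    refine crossingParity_succ_right hf (fun i hi he => ?_) (by omega) fun h => ?_
    · rcases eq_of_bondOf_eq_horizontal he (hf i hi) with ⟨h, -⟩ | ⟨-, h⟩
      · exact hv i hi.le (h.trans (Prod.ext rfl hb))
      · exact hv (i + 1) hi (h.trans (Prod.ext rfl hb))
    · exact hv n le_rfl (Prod.ext (by omega) (by omega))
  calc crossingParity f n x y = crossingParity f n v.1 y := by
        rcases hx with rfl | hx
        exacts [rfl, hside x y hx hy]
    _ = crossingParity f n v.1 v.2 := by
        rcases hy with rfl | hy
        exacts [rfl, hbelow y hy]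

lemma crossingParity_eq_of_starAdj (hf : IsWalk SqAdj f n) {v w : V} (hvw : StarAdj v w)
    (hv : (∀ i ≤ n, f i ≠ v) ∧ (f 0).1 ≤ v.1 ∧ v.1 ≤ (f n).1)
    (hw : (∀ i ≤ n, f i ≠ w) ∧ (f 0).1 ≤ w.1 ∧ w.1 ≤ (f n).1) :
    crossingParity f n v.1 v.2 = crossingParity f n w.1 w.2 := by
  have hadj := starAdj_iff.1 hvw
  exact (crossingParity_eq_of_corner (x := min v.1 w.1) (y := min v.2 w.2) hf hv.1 hv.2.1 hv.2.2
    (by omega) (by omega)).symm.trans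
      (crossingParity_eq_of_corner hf hw.1 hw.2.1 hw.2.2 (by omega) (by omega))

lemma crossingParity_eq_of_starWalk (hf : IsWalk SqAdj f n) (hg : IsWalk StarAdj g l)
    (hdisj : ∀ i ≤ n, ∀ j ≤ l, f i ≠ g j)
    (hrange : ∀ j ≤ l, (f 0).1 ≤ (g j).1 ∧ (g j).1 ≤ (f n).1) :
    ∀ j ≤ l, crossingParity f n (g 0).1 (g 0).2 = crossingParity f n (g j).1 (g j).2 := by
  intro j hj
  induction j with
  | zero => rfl
  | succ j ih =>
    exact (ih (by omega)).trans (crossingParity_eq_of_starAdj hf (hg j hj)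
      ⟨fun i hi => hdisj i hi j (by omega), hrange j (by omega)⟩
      ⟨fun i hi => hdisj i hi (j + 1) hj, hrange (j + 1) hj⟩)

lemma exists_eq_of_starWalk (hf : IsWalk SqAdj f n) (hg : IsWalk StarAdj g l)
    (hx : ∀ j ≤ l, (f 0).1 ≤ (g j).1 ∧ (g j).1 ≤ (f n).1)
    (hy : ∀ i ≤ n, (g 0).2 ≤ (f i).2 ∧ (f i).2 ≤ (g l).2) : ∃ i ≤ n, ∃ j ≤ l, f i = g j := by
  by_contra! hdisj
  have hbottom := (crossingParity_eq_of_corner (x := (g 0).1) (y := (g 0).2 - 1) hf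
    (fun i hi => hdisj i hi 0 l.zero_le) (hx 0 l.zero_le).1 (hx 0 l.zero_le).2 (by omega)
    (by omega)).symm.trans (crossingParity_eq_zero fun i hi => by have := hy i hi; omega)
  have htop := crossingParity_eq_one (x := (g l).1) hf fun i hi => (hy i hi).2
  rw [crossingParity_eq_of_starWalk hf hg hdisj hx l le_rfl, htop] at hbottom
  exact one_ne_zero hbottom

lemma SqAdj.starAdj {a b : V} (h : SqAdj a b) : StarAdj a b := Or.inl h

lemma exists_eq_of_strip_crossings {a b : ℤ} (hf : IsWalk SqAdj f n) (hg : IsWalk SqAdj g l)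
    (hfx : ∀ i ≤ n, a ≤ (f i).1 ∧ (f i).1 ≤ b) (hgx : ∀ j ≤ l, a ≤ (g j).1 ∧ (g j).1 ≤ b)
    (hf0 : (f 0).1 = a) (hfn : (f n).1 = b) (hg0 : (g 0).1 = a) (hgl : (g l).1 = b)
    (h0 : (f 0).2 ≤ (g 0).2) (hl : (g l).2 ≤ (f n).2) : ∃ i ≤ n, ∃ j ≤ l, f i = g j := by
  by_contra! hdisj
  have hab := (hfx 0 n.zero_le).1.trans (hfx 0 n.zero_le).2
  have hx : ∀ j ≤ l, (f 0).1 ≤ (g j).1 ∧ (g j).1 ≤ (f n).1 := by rwa [hf0, hfn]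
  have hsum : ∀ {x y : ℤ}, x + 1 = a ∨ x = b →
      ∑ i ∈ Finset.range n, rayCrossing x y (f i) (f (i + 1)) = 0 := by
    refine fun hx => Finset.sum_eq_zero fun i hi => if_neg ?_
    have := hfx i (Finset.mem_range.1 hi).le
    have := hfx (i + 1) (Finset.mem_range.1 hi)
    omega
  have hstart : crossingParity f n (a - 1) (g 0).2 = 1 := by
    rw [crossingParity, hsum (by omega), if_pos (by omega), if_neg (by omega), add_zero, zero_add]
  have hend : crossingParity f n b ((g l).2 - 1) = 0 := by
    rw [crossingParity, hsum (by omega), if_neg (by omega), if_neg (by omega), add_zero, zero_add]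
  rw [crossingParity_eq_of_corner hf (fun i hi => hdisj i hi 0 l.zero_le) (hx 0 l.zero_le).1
    (hx 0 l.zero_le).2 (by omega) (by omega),
    crossingParity_eq_of_starWalk hf (hg.mono fun _ _ => SqAdj.starAdj) hdisj hx l le_rfl,
    ← crossingParity_eq_of_corner (x := b) (y := (g l).2 - 1) hf (fun i hi => hdisj i hi l le_rfl)
      (hx l le_rfl).1 (hx l le_rfl).2 (by omega) (by omega), hend] at hstart
  exact zero_ne_one hstart

lemma exists_bondOf_eq_dualBond (hf : IsWalk SqAdj f n) (hg : IsWalk SqAdj g l)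
    (hx : ∀ j ≤ l, (f 0).1 ≤ (g j).1 ∧ (g j).1 < (f n).1)
    (hy : ∀ i ≤ n, (g 0).2 < (f i).2 ∧ (f i).2 ≤ (g l).2) :
    ∃ i < n, ∃ j < l, bondOf (f i) (f (i + 1)) = dualBond (bondOf (g j) (g (j + 1))) := by
  by_contra! hne
  have hconst : ∀ j ≤ l,
      crossingParity f n (g 0).1 (g 0).2 = crossingParity f n (g j).1 (g j).2 := by
    intro j hj
    induction j with
    | zero => rfl
    | succ j ih =>
      exact (ih (by omega)).trans (crossingParity_eq_of_sqAdj hf (hg j hj)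
        (fun i hi => hne i hi j hj) (hx j (by omega)).1 (hx j (by omega)).2)
  have hend := hconst l le_rfl
  rw [crossingParity_eq_zero fun i hi => (hy i hi).1,
    crossingParity_eq_one hf fun i hi => (hy i hi).2] at hend
  exact zero_ne_one hend

end Parity

/-! ### Connections of a random lattice relation -/

section Within

variable {α : Type*} {R R' : α → α → Prop} {S S' : Set α} {u v : α}

/-- The relation `R` restricted to the set `S`. -/
def within (R : α → α → Prop) (S : Set α) : α → α → Prop := fun a b => R a b ∧ a ∈ S ∧ b ∈ S

/-- `v` can be reached from `u` by steps of `R` inside `S`. -/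
def ConnIn (R : α → α → Prop) (S : Set α) (u v : α) : Prop :=
  Relation.ReflTransGen (within R S) u v

lemma ConnIn.mono (hR : ∀ a b, R a b → R' a b) (hS : S ⊆ S') (h : ConnIn R S u v) :
    ConnIn R' S' u v :=
  Relation.ReflTransGen.mono (fun _ _ hab => ⟨hR _ _ hab.1, hS hab.2.1, hS hab.2.2⟩) _ _ h

lemma ConnIn.mono_set (hS : S ⊆ S') (h : ConnIn R S u v) : ConnIn R S' u v :=
  h.mono (fun _ _ => id) hS

lemma ConnIn.symm (hR : ∀ a b, R a b → R b a) (h : ConnIn R S u v) : ConnIn R S v u :=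
  Relation.reflTransGen_swap.1 (Relation.ReflTransGen.mono
    (fun _ _ hab => ⟨hR _ _ hab.1, hab.2.2, hab.2.1⟩) _ _ h)

lemma ConnIn.map {β : Type*} {R' : β → β → Prop} {S' : Set β} (σ : α → β)
    (hR : ∀ a b, R a b → R' (σ a) (σ b)) (hS : ∀ a ∈ S, σ a ∈ S') (h : ConnIn R S u v) :
    ConnIn R' S' (σ u) (σ v) :=
  Relation.ReflTransGen.lift σ (fun _ _ hab => ⟨hR _ _ hab.1, hS _ hab.2.1, hS _ hab.2.2⟩) _ _ h

lemma ConnIn.exists_isWalk (h : ConnIn R S u v) (hu : u ∈ S) :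
    ∃ (n : ℕ) (f : ℕ → α), IsWalk (within R S) f n ∧ f 0 = u ∧ f n = v ∧ ∀ i ≤ n, f i ∈ S := by
  obtain ⟨n, f, hf, rfl, rfl⟩ := exists_isWalk_of_reflTransGen h
  refine ⟨n, f, hf, rfl, rfl, fun i hi => ?_⟩
  cases i with
  | zero => exact hu
  | succ i => exact (hf i hi).2.2

lemma exists_connIn_exit (h : Relation.ReflTransGen R u v) (hu : u ∈ S) (hv : v ∉ S) :
    ∃ w x, ConnIn R S u w ∧ w ∈ S ∧ R w x ∧ x ∉ S := by
  suffices H : (ConnIn R S u v ∧ v ∈ S) ∨ ∃ w x, ConnIn R S u w ∧ w ∈ S ∧ R w x ∧ x ∉ S from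
    H.resolve_left fun h => hv h.2
  clear hv
  induction h with
  | refl => exact Or.inl ⟨.refl, hu⟩
  | @tail b c _ hbc ih =>
    rcases ih with ⟨hb, hbS⟩ | ih
    · by_cases hc : c ∈ S
      · exact Or.inl ⟨hb.tail ⟨hbc, hbS, hc⟩, hc⟩
      · exact Or.inr ⟨b, c, hb, hbS, hbc, hc⟩
    · exact Or.inr ih

end Within

/-- Relations on the square lattice, among which the events of percolation theory live. -/
abbrev LatticeRel : Type := V → V → Prop

/-- `R` is the adjacency relation of a subgraph of the square lattice. -/
def IsLatticeSubgraph (R : LatticeRel) : Prop := ∀ a b, R a b → SqAdj a b ∧ R b a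

/-- `Q` is an increasing event, and each of its elements contains a finite element of `Q`. -/
structure IsFinitelyIncreasing (Q : Set LatticeRel) : Prop where
  isUpperSet : IsUpperSet Q
  exists_finset : ∀ R ∈ Q, ∃ T : Finset (V × V),
    (∀ e ∈ T, R e.1 e.2) ∧ (fun a b => (a, b) ∈ T) ∈ Q

/-- `μ` is the law of a random subgraph of the square lattice that is positively associated and
invariant under the automorphisms of the lattice. -/
structure IsPercolationLaw (μ : Measure LatticeRel) : Prop extends IsProbabilityMeasure μ where
  ae_isLatticeSubgraph : ∀ᵐ R ∂μ, IsLatticeSubgraph R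
  mul_le_inter : ∀ Q Q', IsFinitelyIncreasing Q → IsFinitelyIncreasing Q' →
    μ.real Q * μ.real Q' ≤ μ.real (Q ∩ Q')
  map_preimage : ∀ σ : SqAdj ≃r SqAdj, μ.map (fun R => σ ⁻¹'o R) = μ

namespace IsFinitelyIncreasing

variable {Q : Set LatticeRel}

lemma iUnion {ι : Sort*} {Q : ι → Set LatticeRel} (hQ : ∀ i, IsFinitelyIncreasing (Q i)) :
    IsFinitelyIncreasing (⋃ i, Q i) := by
  refine ⟨isUpperSet_iUnion fun i => (hQ i).isUpperSet, fun R hR => ?_⟩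
  obtain ⟨i, hi⟩ := Set.mem_iUnion.1 hR
  obtain ⟨T, hT, hTQ⟩ := (hQ i).exists_finset R hi
  exact ⟨T, hT, Set.mem_iUnion.2 ⟨i, hTQ⟩⟩

lemma iInter {ι : Type*} [Finite ι] {Q : ι → Set LatticeRel}
    (hQ : ∀ i, IsFinitelyIncreasing (Q i)) : IsFinitelyIncreasing (⋂ i, Q i) := by
  classical
  have := Fintype.ofFinite ι
  refine ⟨isUpperSet_iInter fun i => (hQ i).isUpperSet, fun R hR => ?_⟩
  choose T hT hTQ using fun i => (hQ i).exists_finset R (Set.mem_iInter.1 hR i)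
  refine ⟨Finset.univ.biUnion T, fun e he => ?_, Set.mem_iInter.2 fun i =>
    (hQ i).isUpperSet (fun a b h => Finset.mem_biUnion.2 ⟨i, Finset.mem_univ i, h⟩) (hTQ i)⟩
  obtain ⟨i, -, hi⟩ := Finset.mem_biUnion.1 he
  exact hT i e hi

lemma preimage (hQ : IsFinitelyIncreasing Q) (σ : V ≃ V) :
    IsFinitelyIncreasing ((fun R => σ ⁻¹'o R) ⁻¹' Q) := by
  classical
  refine ⟨fun R R' hRR' hR => hQ.isUpperSet (fun a b => hRR' (σ a) (σ b)) hR, fun R hR => ?_⟩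
  obtain ⟨T, hT, hTQ⟩ := hQ.exists_finset _ hR
  refine ⟨T.image (Prod.map σ σ), fun e he => ?_, hQ.isUpperSet (fun a b h => ?_) hTQ⟩
  · obtain ⟨d, hd, rfl⟩ := Finset.mem_image.1 he
    exact hT d hd
  · exact Finset.mem_image.2 ⟨(a, b), h, rfl⟩

lemma measurableSet (hQ : IsFinitelyIncreasing Q) : MeasurableSet Q := by
  have hcover : Q = ⋃ T ∈ {T : Finset (V × V) | (fun a b => (a, b) ∈ T) ∈ Q},
      {R | ∀ e ∈ T, R e.1 e.2} := by
    refine Set.Subset.antisymm (fun R hR => ?_) (Set.iUnion₂_subset fun T hT R hR => ?_)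
    · obtain ⟨T, hT, hTQ⟩ := hQ.exists_finset R hR
      exact Set.mem_iUnion₂.2 ⟨T, hTQ, hT⟩
    · exact hQ.isUpperSet (fun a b h => hR (a, b) h) hT
  rw [hcover]
  refine MeasurableSet.biUnion (Set.to_countable _) fun T _ => ?_
  simp only [Set.ofPred_forall]
  refine MeasurableSet.biInter T.countable_toSet fun e _ => measurableSet_setOfPred.2 ?_
  exact (measurable_pi_apply e.2).comp (measurable_pi_apply e.1)

end IsFinitelyIncreasing

/-- The event that `u` is connected inside `S` to some vertex of `A`. -/
def connEvent (S : Set V) (u : V) (A : Set V) : Set LatticeRel := {R | ∃ v ∈ A, ConnIn R S u v}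

lemma isFinitelyIncreasing_connIn (S : Set V) (u v : V) :
    IsFinitelyIncreasing {R | ConnIn R S u v} := by
  classical
  refine ⟨fun R R' hR h => ConnIn.mono hR subset_rfl h, fun R h => ?_⟩
  induction h with
  | refl => exact ⟨∅, fun e he => absurd he (Finset.notMem_empty e), .refl⟩
  | @tail b c _ hbc ih =>
    obtain ⟨T, hT, hTuv⟩ := ih
    refine ⟨insert (b, c) T, fun e he => ?_, ConnIn.mono (fun _ _ => Finset.mem_insert_of_mem)
      subset_rfl hTuv |>.tail ⟨Finset.mem_insert_self _ _, hbc.2⟩⟩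
    rcases Finset.mem_insert.1 he with rfl | he
    exacts [hbc.1, hT e he]

lemma isFinitelyIncreasing_connEvent (S : Set V) (u : V) (A : Set V) :
    IsFinitelyIncreasing (connEvent S u A) := by
  have hunion : connEvent S u A = ⋃ v, ⋃ _ : v ∈ A, {R | ConnIn R S u v} := by
    ext R
    simp only [connEvent, Set.mem_ofPred_eq, Set.mem_iUnion, exists_prop]
  rw [hunion]
  exact .iUnion fun v => .iUnion fun _ => isFinitelyIncreasing_connIn S u v

lemma measurable_preimage_rel (f : V → V) : Measurable fun R : LatticeRel => f ⁻¹'o R :=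
  measurable_pi_iff.2 fun a => measurable_pi_iff.2 fun b =>
    (measurable_pi_apply (f b)).comp (measurable_pi_apply (f a))

/-! ### Symmetries of the square lattice -/

/-- The translation by `z`. -/
def translate (z : V) : SqAdj ≃r SqAdj :=
  ⟨Equiv.addRight z, by simp [SqAdj]⟩

/-- The multiplication of the two coordinates by the signs `ε` and `δ`. -/
def signFlip (ε δ : ℤˣ) : SqAdj ≃r SqAdj :=
  ⟨(Units.mulLeft ε).prodCongr (Units.mulLeft δ), by
    intro a b
    rcases Int.units_eq_one_or ε with rfl | rfl <;> rcases Int.units_eq_one_or δ with rfl | rfl <;>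
      simp only [SqAdj, Equiv.prodCongr_apply, Prod.map, Units.mulLeft_apply, Units.val_one,
        Units.val_neg] <;> ring_nf⟩

/-- The exchange of the two coordinates. -/
def swapCoords : SqAdj ≃r SqAdj :=
  ⟨Equiv.prodComm ℤ ℤ, by simp [SqAdj, add_comm]⟩

/-- The rotation by a quarter turn about the origin. -/
def quarterTurn : SqAdj ≃r SqAdj := swapCoords.trans (signFlip (-1) 1)

@[simp] lemma translate_apply (z v : V) : translate z v = v + z := rfl

@[simp] lemma signFlip_apply (ε δ : ℤˣ) (v : V) : signFlip ε δ v = (ε * v.1, δ * v.2) := rfl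

@[simp] lemma swapCoords_apply (v : V) : swapCoords v = (v.2, v.1) := rfl

@[simp] lemma quarterTurn_apply (v : V) : quarterTurn v = (-v.2, v.1) := by
  simp [quarterTurn]

/-! ### Long crossings and circuits -/

/-- The box of radius `m` centred at `z`. -/
def box (m : ℤ) (z : V) : Set V :=
  {v | z.1 - m ≤ v.1 ∧ v.1 ≤ z.1 + m ∧ z.2 - m ≤ v.2 ∧ v.2 ≤ z.2 + m}

/-- The vertical segment at abscissa `x` between the heights `a` and `b`. -/
def verticalSegment (x a b : ℤ) : Set V := {v | v.1 = x ∧ a ≤ v.2 ∧ v.2 ≤ b}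

/-- The horizontal strip between the heights `a` and `b`. -/
def horizontalStrip (a b : ℤ) : Set V := {v | a ≤ v.2 ∧ v.2 ≤ b}

/-- The event that the origin is connected to the boundary of the box of radius `m`. -/
def armEvent (m : ℤ) : Set LatticeRel := connEvent (box m 0) 0 (box m 0 \ box (m - 1) 0)

/-- The event that `z` is connected, inside the box of radius `m` around it, to each of the four
parts of the vertical sides of the box at vertical distance at least `a` from `z`. -/
def cornerEvent (m a : ℤ) (z : V) : Set LatticeRel :=
  ⋂ e : ℤˣ × ℤˣ, connEvent (box m z) z
    {v | v.1 = z.1 + e.1 * m ∧ a ≤ e.2 * (v.2 - z.2) ∧ e.2 * (v.2 - z.2) ≤ m}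

/-- The event that the strip between the heights `N` and `M` is crossed from the left to the right
of the box of radius `M`. -/
def topCrossing (N M : ℤ) : Set LatticeRel :=
  ⋃ u ∈ {u ∈ horizontalStrip N M | u.1 < -M}, connEvent (horizontalStrip N M) u {v | M < v.1}

/-- The event that the four images of the strip between the heights `N` and `M` under quarter turns
are crossed. -/
def circuitEvent (N M : ℤ) : Set LatticeRel :=
  ⋂ k : Fin 4, (fun R => (quarterTurn ^ (k : ℕ)).symm ⁻¹'o R) ⁻¹' topCrossing N M

lemma isFinitelyIncreasing_cornerEvent (m a : ℤ) (z : V) :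
    IsFinitelyIncreasing (cornerEvent m a z) :=
  .iInter fun _ => isFinitelyIncreasing_connEvent _ _ _

lemma isFinitelyIncreasing_topCrossing (N M : ℤ) : IsFinitelyIncreasing (topCrossing N M) :=
  .iUnion fun _ => .iUnion fun _ => isFinitelyIncreasing_connEvent _ _ _

lemma isFinitelyIncreasing_circuitEvent (N M : ℤ) : IsFinitelyIncreasing (circuitEvent N M) :=
  .iInter fun _ => (isFinitelyIncreasing_topCrossing N M).preimage _

section Crossings

variable {R : LatticeRel} {S : Set V} {p q p' q' u v : V} {a b m s : ℤ}

-- The two paths share a vertex, by planarity.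
lemma ConnIn.of_strip_crossings (hR : IsLatticeSubgraph R)
    (hS : ∀ v ∈ S, a ≤ v.1 ∧ v.1 ≤ b) (h : ConnIn R S p q) (h' : ConnIn R S p' q')
    (hpS : p ∈ S) (hpS' : p' ∈ S) (hp : p.1 = a) (hq : q.1 = b) (hp' : p'.1 = a) (hq' : q'.1 = b)
    (h0 : p.2 ≤ p'.2) (h1 : q'.2 ≤ q.2) : ConnIn R S p p' := by
  obtain ⟨n, f, hf, rfl, rfl, hfS⟩ := h.exists_isWalk hpS
  obtain ⟨l, g, hg, rfl, rfl, hgS⟩ := h'.exists_isWalk hpS'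
  obtain ⟨i, hi, j, hj, hij⟩ := exists_eq_of_strip_crossings
    (hf.mono fun _ _ h => (hR _ _ h.1).1) (hg.mono fun _ _ h => (hR _ _ h.1).1)
    (fun i hi => hS _ (hfS i hi)) (fun j hj => hS _ (hgS j hj)) hp hq hp' hq' h0 h1
  have hfi : ConnIn R S (f 0) (f i) := hf.reflTransGen i.zero_le hi
  have hgj : ConnIn R S (g 0) (g j) := hg.reflTransGen j.zero_le hj
  exact hfi.trans (hij ▸ hgj.symm fun a b h => (hR a b h).2)

lemma ConnIn.exists_last_visit (hR : IsLatticeSubgraph R) (h : ConnIn R S u v) (huS : u ∈ S)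
    (hu : u.1 ≤ a) (hv : a ≤ v.1) :
    ∃ w ∈ S, w.1 = a ∧ ConnIn R S u w ∧ ConnIn R (S ∩ {x | a ≤ x.1}) w v := by
  induction h with
  | refl => exact ⟨u, huS, le_antisymm hu hv, .refl, .refl⟩
  | @tail b c hub hbc ih =>
    rcases le_or_gt a b.1 with hb | hb
    · obtain ⟨w, hwS, hw, huw, hwb⟩ := ih hb
      exact ⟨w, hwS, hw, huw, hwb.tail ⟨hbc.1, ⟨hbc.2.1, hb⟩, ⟨hbc.2.2, hv⟩⟩⟩
    · have hstep := sqAdj_iff.1 (hR _ _ hbc.1).1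
      exact ⟨c, hbc.2.2, by omega, hub.tail hbc, .refl⟩

lemma exists_of_mem_cornerEvent {z : V} (h : R ∈ cornerEvent m a z) (ε δ : ℤˣ) :
    ∃ v, v.1 = z.1 + ε * m ∧ a ≤ δ * (v.2 - z.2) ∧ δ * (v.2 - z.2) ≤ m ∧
      ConnIn R (box m z) z v := by
  obtain ⟨v, ⟨h1, h2, h3⟩, hv⟩ := Set.mem_iInter.1 h (ε, δ)
  exact ⟨v, h1, h2, h3, hv⟩

lemma connEvent_of_cornerEvents (hR : IsLatticeSubgraph R) (ha : 0 ≤ a) (ham : a ≤ m)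
    (h : R ∈ cornerEvent m a 0) (h' : R ∈ cornerEvent m a (0, 2 * a)) :
    R ∈ connEvent {v | -m ≤ v.1 ∧ v.1 ≤ m} 0 {(0, 2 * a)} := by
  set S : Set V := {v | -m ≤ v.1 ∧ v.1 ≤ m}
  have hsymm : ∀ a b, R a b → R b a := fun a b h => (hR a b h).2
  have hbox : ∀ y : ℤ, box m (0, y) ⊆ S := fun y v hv => by
    simp only [box, S, Set.mem_ofPred_eq] at hv ⊢; omega
  obtain ⟨p, hp, hp1, -, hpc⟩ := exists_of_mem_cornerEvent h (-1) (-1)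
  obtain ⟨q, hq, hq1, -, hqc⟩ := exists_of_mem_cornerEvent h 1 1
  obtain ⟨p', hp', hp1', -, hpc'⟩ := exists_of_mem_cornerEvent h' (-1) 1
  obtain ⟨q', hq', hq1', -, hqc'⟩ := exists_of_mem_cornerEvent h' 1 (-1)
  replace hpc := hpc.mono_set (hbox 0)
  replace hpc' := hpc'.mono_set (hbox (2 * a))
  simp only [Units.val_neg, Units.val_one, Prod.fst_zero, Prod.snd_zero] at *
  have hpp' : ConnIn R S p p' := .of_strip_crossings hR (fun v hv => hv)
    ((hpc.symm hsymm).trans (hqc.mono_set (hbox 0)))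
    ((hpc'.symm hsymm).trans (hqc'.mono_set (hbox (2 * a))))
    ⟨by omega, by omega⟩ ⟨by omega, by omega⟩ (by omega) (by omega) (by omega) (by omega)
    (by omega) (by omega)
  exact ⟨_, rfl, (hpc.trans hpp').trans (hpc'.symm hsymm)⟩

-- The last piece of the path to the right side crosses the square `[0, 2s] × [a - s, a + s]`
-- horizontally, hence meets a path joining two of the corners reached from its centre `(s, a)`.
lemma connIn_of_cornerEvent_of_connEvent (hR : IsLatticeSubgraph R) (hs : 0 < s)
    (has : a ≤ s) (h : R ∈ cornerEvent s a (s, a))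
    (h' : R ∈ connEvent (box (2 * s) 0) 0 (verticalSegment (2 * s) 0 (2 * a))) :
    R ∈ connEvent (horizontalStrip (-(2 * s)) (2 * s)) 0 {(s, a)} := by
  obtain ⟨y, ⟨hy1, hy2, hy3⟩, hy⟩ := h'
  set S : Set V := horizontalStrip (-(2 * s)) (2 * s) with hS
  set T : Set V := {v ∈ S | 0 ≤ v.1 ∧ v.1 ≤ 2 * s} with hT
  have hsymm : ∀ a b, R a b → R b a := fun a b h => (hR a b h).2
  have hTS : T ⊆ S := fun v hv => hv.1
  have hcorner : box s (s, a) ⊆ T := fun v hv => by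
    simp only [box, hT, hS, horizontalStrip, Set.mem_ofPred_eq] at hv ⊢; omega
  have hboxS : box (2 * s) 0 ⊆ S := fun v hv => by
    simp only [box, hS, horizontalStrip, Set.mem_ofPred_eq, Prod.fst_zero, Prod.snd_zero] at hv ⊢
    omega
  have hboxT : box (2 * s) 0 ∩ {v | 0 ≤ v.1} ⊆ T := fun v hv => by
    simp only [box, hT, hS, horizontalStrip, Set.mem_ofPred_eq, Set.mem_inter_iff, Prod.fst_zero,
      Prod.snd_zero] at hv ⊢
    omega
  obtain ⟨ul, hul, hul1, hul2, hulc⟩ := exists_of_mem_cornerEvent h (-1) 1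
  obtain ⟨ur, hur, hur1, -, hurc⟩ := exists_of_mem_cornerEvent h 1 1
  obtain ⟨lr, hlr, hlr1, -, hlrc⟩ := exists_of_mem_cornerEvent h 1 (-1)
  obtain ⟨w, hw, hw0, h0w, hwy⟩ := hy.exists_last_visit hR (a := 0)
    (by simp only [box, Set.mem_ofPred_eq, Prod.fst_zero, Prod.snd_zero]; omega) le_rfl (by omega)
  replace hulc := hulc.mono_set hcorner
  replace hwy := hwy.mono_set hboxT
  simp only [Units.val_neg, Units.val_one] at *
  have hwT : w ∈ T := hboxT ⟨hw, hw0.ge⟩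
  have hulT : ul ∈ T := by
    simp only [hT, hS, horizontalStrip, Set.mem_ofPred_eq]; omega
  have hwul : ConnIn R T w ul := by
    rcases le_total w.2 ul.2 with hc | hc
    · exact .of_strip_crossings hR (fun v hv => hv.2) hwy
        ((hulc.symm hsymm).trans (hlrc.mono_set hcorner)) hwT hulT hw0 hy1 (by omega) (by omega)
        hc (by omega)
    · exact .symm hsymm (.of_strip_crossings hR (fun v hv => hv.2)
        ((hulc.symm hsymm).trans (hurc.mono_set hcorner)) hwy hulT hwT (by omega) (by omega) hw0 hy1
        hc (by omega))
  exact ⟨_, rfl, (h0w.mono_set hboxS).trans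
    ((hwul.mono_set hTS).trans ((hulc.symm hsymm).mono_set hTS))⟩

end Crossings

namespace IsPercolationLaw

variable {μ : Measure LatticeRel} {Q Q' : Set LatticeRel} {c θ : ℝ} {m a s : ℤ}

lemma real_mono (H : IsPercolationLaw μ) (h : ∀ R, IsLatticeSubgraph R → R ∈ Q → R ∈ Q') :
    μ.real Q ≤ μ.real Q' :=
  have := H.toIsProbabilityMeasure
  ENNReal.toReal_mono (measure_ne_top μ Q')
    (measure_mono_ae (H.ae_isLatticeSubgraph.mono fun R hR => h R hR))

lemma real_preimage (H : IsPercolationLaw μ) (σ : SqAdj ≃r SqAdj) (hQ : IsFinitelyIncreasing Q) :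
    μ.real ((fun R => σ ⁻¹'o R) ⁻¹' Q) = μ.real Q := by
  conv_rhs => rw [← H.map_preimage σ,
    map_measureReal_apply (measurable_preimage_rel σ) hQ.measurableSet]

lemma real_connEvent_le (H : IsPercolationLaw μ) (σ : SqAdj ≃r SqAdj) {S S' A A' : Set V}
    {u u' : V} (hu : σ u = u') (hS : ∀ v ∈ S, σ v ∈ S') (hA : ∀ v ∈ A, σ v ∈ A') :
    μ.real (connEvent S u A) ≤ μ.real (connEvent S' u' A') := by
  rw [← H.real_preimage σ (isFinitelyIncreasing_connEvent S u A)]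
  refine H.real_mono ?_
  rintro R - ⟨v, hv, h⟩
  exact ⟨σ v, hA v hv, hu ▸ h.map σ (fun _ _ => id) hS⟩

lemma mul_le_real_inter (H : IsPercolationLaw μ) (hQ : IsFinitelyIncreasing Q)
    (hQ' : IsFinitelyIncreasing Q') {c' : ℝ} (hc' : 0 ≤ c') (h : c ≤ μ.real Q)
    (h' : c' ≤ μ.real Q') : c * c' ≤ μ.real (Q ∩ Q') :=
  (mul_le_mul h h' hc' measureReal_nonneg).trans (H.mul_le_inter Q Q' hQ hQ')

lemma pow_card_le_real_iInter (H : IsPercolationLaw μ) {ι : Type*} [Fintype ι]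
    {Q : ι → Set LatticeRel} (hQ : ∀ i, IsFinitelyIncreasing (Q i)) (hc : 0 ≤ c)
    (h : ∀ i, c ≤ μ.real (Q i)) : c ^ Fintype.card ι ≤ μ.real (⋂ i, Q i) := by
  classical
  have := H.toIsProbabilityMeasure
  suffices ∀ s : Finset ι, c ^ s.card ≤ μ.real (⋂ i ∈ s, Q i) by
    simpa only [Finset.mem_univ, Set.iInter_true, Finset.card_univ] using this Finset.univ
  intro s
  induction s using Finset.induction_on with
  | empty => simp
  | insert i s hi ih =>
    rw [Finset.card_insert_of_notMem hi, pow_succ', Finset.set_biInter_insert]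
    refine H.mul_le_real_inter (hQ i) ?_ (pow_nonneg hc _) (h i) ih
    rw [← Finset.set_biInter_coe, Set.biInter_eq_iInter]
    exact .iInter fun i => hQ i

lemma real_armEvent_le (H : IsPercolationLaw μ) (m : ℤ) :
    μ.real (armEvent m) ≤ 8 * μ.real (connEvent (box m 0) 0 (verticalSegment m 0 m)) := by
  have := H.toIsProbabilityMeasure
  let σ : Bool × ℤˣ × ℤˣ → (SqAdj ≃r SqAdj) :=
    fun e => (cond e.1 swapCoords (RelIso.refl _)).trans (signFlip e.2.1 e.2.2)
  let Q : Bool × ℤˣ × ℤˣ → Set LatticeRel :=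
    fun e => connEvent (box m 0) 0 (σ e ⁻¹' verticalSegment m 0 m)
  have hσ : ∀ e, ∀ v ∈ box m 0, σ e v ∈ box m 0 := by
    rintro ⟨b, ε, δ⟩ v hv
    cases b <;> rcases Int.units_eq_one_or ε with rfl | rfl <;>
      rcases Int.units_eq_one_or δ with rfl | rfl <;> simp [σ, box] at hv ⊢ <;> omega
  have hQ : ∀ e, μ.real (Q e) ≤ μ.real (connEvent (box m 0) 0 (verticalSegment m 0 m)) := by
    refine fun e => H.real_connEvent_le (σ e) ?_ (hσ e) fun v hv => hv
    rcases e with ⟨_ | _, ε, δ⟩ <;> simp [σ]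
  have hsign : ∀ n : ℤ, ∃ ε : ℤˣ, 0 ≤ ε * n := fun n =>
    (le_total 0 n).elim (fun h => ⟨1, by simpa using h⟩) fun h => ⟨-1, by simpa using h⟩
  have hcover : armEvent m ⊆ ⋃ e, Q e := by
    rintro R ⟨v, hv, h⟩
    obtain ⟨e, he⟩ : ∃ e, σ e v ∈ verticalSegment m 0 m := by
      obtain ⟨ε, hε⟩ := hsign v.1
      obtain ⟨δ, hδ⟩ := hsign v.2
      suffices ε * v.1 = m ∧ δ * v.2 ≤ m ∨ δ * v.2 = m ∧ ε * v.1 ≤ m from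
        this.elim (fun h => ⟨(false, ε, δ), h.1, hδ, h.2⟩) fun h => ⟨(true, δ, ε), h.1, hε, h.2⟩
      rcases Int.units_eq_one_or ε with rfl | rfl <;>
        rcases Int.units_eq_one_or δ with rfl | rfl <;> simp [box] at hε hδ hv ⊢ <;> omega
    exact Set.mem_iUnion.2 ⟨e, v, he, h⟩
  calc μ.real (armEvent m) ≤ ∑ e, μ.real (Q e) :=
        (measureReal_mono hcover).trans (measureReal_iUnion_fintype_le Q)
    _ ≤ ∑ _ : Bool × ℤˣ × ℤˣ, μ.real (connEvent (box m 0) 0 (verticalSegment m 0 m)) :=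
        Finset.sum_le_sum fun e _ => hQ e
    _ = 8 * μ.real (connEvent (box m 0) 0 (verticalSegment m 0 m)) := by
        rw [Finset.sum_const, nsmul_eq_mul]; rfl

-- `a` is the largest height for which the first bound holds.
lemma exists_split_height (H : IsPercolationLaw μ) (hm : 0 ≤ m) (hc : 0 < c)
    (h : 2 * c ≤ μ.real (connEvent (box m 0) 0 (verticalSegment m 0 m))) :
    ∃ a, 0 ≤ a ∧ a ≤ m ∧ c ≤ μ.real (connEvent (box m 0) 0 (verticalSegment m a m)) ∧
      c ≤ μ.real (connEvent (box m 0) 0 (verticalSegment m 0 a)) := by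
  have := H.toIsProbabilityMeasure
  set P : ℤ → ℤ → ℝ := fun a b => μ.real (connEvent (box m 0) 0 (verticalSegment m a b))
  obtain ⟨a, ⟨ha0, ham, hac⟩, hmax⟩ := Int.exists_greatest_of_bdd
    (P := fun a => 0 ≤ a ∧ a ≤ m ∧ c ≤ P a m) ⟨m, fun z hz => hz.2.1⟩ ⟨0, le_rfl, hm, by linarith⟩
  refine ⟨a, ha0, ham, hac, ?_⟩
  rcases ham.eq_or_lt with rfl | ham
  · linarith
  have hlt : P (a + 1) m < c := by
    by_contra! hge
    exact absurd (hmax (a + 1) ⟨by omega, ham, hge⟩) (by omega)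
  have hsplit : P 0 m ≤ P 0 a + P (a + 1) m := by
    refine (measureReal_mono ?_).trans (measureReal_union_le _ _)
    rintro R ⟨v, ⟨hv1, hv2, hv3⟩, h⟩
    rcases le_or_gt v.2 a with hva | hva
    exacts [Or.inl ⟨v, ⟨hv1, hv2, hva⟩, h⟩, Or.inr ⟨v, ⟨hv1, hva, hv3⟩, h⟩]
  linarith

lemma pow_four_le_real_cornerEvent (H : IsPercolationLaw μ) (hc : 0 ≤ c)
    (h : c ≤ μ.real (connEvent (box m 0) 0 (verticalSegment m a m))) (z : V) :
    c ^ 4 ≤ μ.real (cornerEvent m a z) := by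
  change c ^ Fintype.card (ℤˣ × ℤˣ) ≤ _
  refine H.pow_card_le_real_iInter (fun _ => isFinitelyIncreasing_connEvent _ _ _) hc
    fun ⟨ε, δ⟩ => h.trans (H.real_connEvent_le ((signFlip ε δ).trans (translate z)) ?_ ?_ ?_)
  · simp
  all_goals
    intro v hv
    rcases Int.units_eq_one_or ε with rfl | rfl <;>
      rcases Int.units_eq_one_or δ with rfl | rfl <;>
      simp [box, verticalSegment] at hv ⊢ <;> omega

lemma pow_le_real_connEvent_nsmul (H : IsPercolationLaw μ) {S : Set V} {d : V}
    (hS : ∀ v ∈ S, ∀ k : ℕ, v + k • d ∈ S) (hc : 0 ≤ c) (h : c ≤ μ.real (connEvent S 0 {d}))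
    (k : ℕ) : c ^ k ≤ μ.real (connEvent S 0 {k • d}) := by
  have := H.toIsProbabilityMeasure
  induction k with
  | zero =>
    have huniv : connEvent S 0 {(0 : ℕ) • d} = Set.univ :=
      Set.eq_univ_of_forall fun R => ⟨_, rfl, by rw [zero_nsmul]; exact .refl⟩
    rw [huniv, pow_zero, probReal_univ]
  | succ k ih =>
    have hstep : c ≤ μ.real (connEvent S (k • d) {(k + 1) • d}) := by
      refine h.trans (H.real_connEvent_le (translate (k • d)) (zero_add _)
        (fun v hv => hS v hv k) ?_)
      rintro v rfl
      exact (succ_nsmul' v k).symm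
    refine (H.mul_le_real_inter (isFinitelyIncreasing_connEvent _ _ _)
      (isFinitelyIncreasing_connEvent _ _ _) hc ih hstep).trans (measureReal_mono ?_)
    rintro R ⟨⟨v, rfl, hv⟩, ⟨w, hw, hvw⟩⟩
    exact ⟨w, hw, hv.trans hvw⟩

lemma pow_le_real_connEvent_of_corner (H : IsPercolationLaw μ) (ha : 0 ≤ a) (ham : a ≤ m)
    (hc : 0 ≤ c) (h : c ≤ μ.real (connEvent (box m 0) 0 (verticalSegment m a m))) (k : ℕ) :
    (c ^ 4 * c ^ 4) ^ k ≤ μ.real (connEvent (horizontalStrip (-m) m) 0 {(k * (2 * a), 0)}) := by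
  have hstep : c ^ 4 * c ^ 4 ≤ μ.real (connEvent {v | -m ≤ v.1 ∧ v.1 ≤ m} 0 {(0, 2 * a)}) :=
    (H.mul_le_real_inter (isFinitelyIncreasing_cornerEvent m a 0)
      (isFinitelyIncreasing_cornerEvent m a (0, 2 * a)) (by positivity)
      (H.pow_four_le_real_cornerEvent hc h _) (H.pow_four_le_real_cornerEvent hc h _)).trans
    (H.real_mono fun R hR hh => connEvent_of_cornerEvents hR ha ham hh.1 hh.2)
  refine (H.pow_le_real_connEvent_nsmul (fun v hv k => ?_) (by positivity) hstep k).trans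
    (H.real_connEvent_le swapCoords rfl (fun v hv => hv) ?_)
  · simpa using hv
  · rintro v rfl
    simp

lemma pow_le_real_connEvent_of_corner_of_segment (H : IsPercolationLaw μ) (hs : 0 < s)
    (has : a ≤ s) (hc : 0 ≤ c) (h : c ≤ μ.real (connEvent (box s 0) 0 (verticalSegment s a s)))
    (h' : c ≤ μ.real (connEvent (box (2 * s) 0) 0 (verticalSegment (2 * s) 0 (2 * a)))) (k : ℕ) :
    (c ^ 5 * c ^ 5) ^ k ≤
      μ.real (connEvent (horizontalStrip (-(2 * s)) (2 * s)) 0 {(k * (2 * s), 0)}) := by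
  have := H.toIsProbabilityMeasure
  set S := horizontalStrip (-(2 * s)) (2 * s) with hS
  have hhalf : c ^ 5 ≤ μ.real (connEvent S 0 {(s, a)}) :=
    (H.mul_le_real_inter (isFinitelyIncreasing_cornerEvent s a (s, a))
      (isFinitelyIncreasing_connEvent _ _ _) hc
      (H.pow_four_le_real_cornerEvent hc h _) h').trans
    (H.real_mono fun R hR hh => connIn_of_cornerEvent_of_connEvent hR hs has hh.1 hh.2)
  have hhalf' : c ^ 5 ≤ μ.real (connEvent S (2 * s, 0) {(s, a)}) := by
    refine hhalf.trans (H.real_connEvent_le ((signFlip (-1) 1).trans (translate (2 * s, 0)))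
      (by simp) (fun v hv => by simpa [hS, horizontalStrip] using hv) ?_)
    rintro v rfl
    simp only [RelIso.trans_apply, signFlip_apply, translate_apply, Set.mem_singleton_iff,
      Prod.ext_iff, Prod.fst_add, Prod.snd_add, Units.val_neg, Units.val_one]
    omega
  have hstep : c ^ 5 * c ^ 5 ≤ μ.real (connEvent S 0 {(2 * s, 0)}) := by
    refine (H.mul_le_real_inter (isFinitelyIncreasing_connEvent _ _ _)
      (isFinitelyIncreasing_connEvent _ _ _) (by positivity) hhalf hhalf').trans
      (H.real_mono ?_)
    rintro R hR ⟨⟨v, rfl, hv⟩, ⟨w, rfl, hw⟩⟩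
    exact ⟨_, rfl, hv.trans (hw.symm fun a b h => (hR a b h).2)⟩
  refine (H.pow_le_real_connEvent_nsmul (fun v hv k => ?_) (by positivity) hstep k).trans_eq ?_
  · simpa [hS, horizontalStrip] using hv
  · simp

end IsPercolationLaw

lemma frequently_double_le_or_frequently_linear (α : ℕ → ℕ) :
    (∃ᶠ s in Filter.atTop, α (2 * s) ≤ 2 * α s) ∨ ∃ K, ∃ᶠ m in Filter.atTop, m ≤ K * α m := by
  refine or_iff_not_imp_left.2 fun h => ?_
  simp only [Filter.not_frequently, not_le, Filter.eventually_atTop] at h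
  obtain ⟨N, hN⟩ := h
  set M := max N 1
  have hgrow : ∀ j : ℕ, 2 ^ j ≤ α (2 ^ (j + 1) * M) := by
    intro j
    induction j with
    | zero => exact Nat.one_le_iff_ne_zero.2 (by have := hN M (le_max_left _ _); simp; omega)
    | succ j ih =>
      have hle : N ≤ 2 ^ (j + 1) * M :=
        (le_max_left N 1).trans (Nat.le_mul_of_pos_left M (by positivity))
      calc 2 ^ (j + 1) = 2 * 2 ^ j := pow_succ' 2 j
        _ ≤ 2 * α (2 ^ (j + 1) * M) := Nat.mul_le_mul_left 2 ih
        _ ≤ α (2 ^ (j + 1 + 1) * M) := by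
          rw [pow_succ' 2 (j + 1), mul_assoc]
          exact (hN _ hle).le
  refine ⟨2 * M, Filter.frequently_atTop.2 fun n => ⟨2 ^ (n + 1) * M, ?_, ?_⟩⟩
  · calc n ≤ 2 ^ (n + 1) := (Nat.lt_two_pow_self.trans (Nat.pow_lt_pow_succ one_lt_two)).le
      _ ≤ 2 ^ (n + 1) * M := Nat.le_mul_of_pos_right _ (by positivity)
  · calc 2 ^ (n + 1) * M = 2 * M * 2 ^ n := by ring
      _ ≤ 2 * M * α (2 ^ (n + 1) * M) := Nat.mul_le_mul_left _ (hgrow n)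

namespace IsPercolationLaw

variable {μ : Measure LatticeRel} {c θ : ℝ}

lemma exists_long_crossings (H : IsPercolationLaw μ) (hθ : 0 < θ)
    (harm : ∀ m : ℕ, θ ≤ μ.real (armEvent m)) :
    ∃ c > 0, ∃ᶠ m : ℕ in Filter.atTop, ∃ L : ℤ, 10 * m ≤ L ∧
      c ≤ μ.real (connEvent (horizontalStrip (-m) m) 0 {(L, 0)}) := by
  have hα : ∀ m : ℕ, ∃ a : ℕ, a ≤ m ∧
      θ / 16 ≤ μ.real (connEvent (box m 0) 0 (verticalSegment m a m)) ∧
      θ / 16 ≤ μ.real (connEvent (box m 0) 0 (verticalSegment m 0 a)) := by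
    intro m
    obtain ⟨a, ha, ham, h⟩ := H.exists_split_height (m := m) (c := θ / 16) (by omega)
      (by positivity) (by linarith [harm m, H.real_armEvent_le m])
    lift a to ℕ using ha
    exact ⟨a, by exact_mod_cast ham, h⟩
  choose α hαm hα_top hα_bot using hα
  rcases frequently_double_le_or_frequently_linear α with hdouble | ⟨K, hlin⟩
  · refine ⟨(((θ / 16) ^ 5) * (θ / 16) ^ 5) ^ 10, by positivity, ?_⟩
    refine Filter.frequently_atTop.2 fun N => ?_
    obtain ⟨s, hs, hαs⟩ := Filter.frequently_atTop.1 hdouble (max N 1)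
    have hαs_bot : θ / 16 ≤
        μ.real (connEvent (box (2 * s) 0) 0 (verticalSegment (2 * s) 0 (2 * α s))) := by
      refine (hα_bot (2 * s)).trans (H.real_connEvent_le (RelIso.refl _) rfl ?_ ?_) <;> intro v hv
      · simpa using hv
      · exact ⟨by simpa using hv.1, hv.2.1, hv.2.2.trans (by exact_mod_cast hαs)⟩
    have hs_long := H.pow_le_real_connEvent_of_corner_of_segment (s := s) (a := α s) (by omega)
      (by exact_mod_cast hαm s) (by positivity) (hα_top s) hαs_bot 10
    exact ⟨2 * s, by omega, 10 * (2 * s), by omega, by exact_mod_cast hs_long⟩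
  · refine ⟨(((θ / 16) ^ 4) * (θ / 16) ^ 4) ^ (5 * K), by positivity, ?_⟩
    refine hlin.mono fun m hm => ⟨_, ?_, H.pow_le_real_connEvent_of_corner (by positivity)
      (by exact_mod_cast hαm m) (by positivity) (hα_top m) (5 * K)⟩
    push_cast
    nlinarith

lemma exists_circuitEvents (H : IsPercolationLaw μ) (hθ : 0 < θ)
    (harm : ∀ m : ℕ, θ ≤ μ.real (armEvent m)) :
    ∃ c > 0, ∀ N, ∃ M, N < M ∧ c ≤ μ.real (circuitEvent N M) := by
  have := H.toIsProbabilityMeasure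
  obtain ⟨c, hc, hlong⟩ := H.exists_long_crossings hθ harm
  refine ⟨c ^ 4, by positivity, fun N => ?_⟩
  obtain ⟨m, hm, L, hL, hmL⟩ := Filter.frequently_atTop.1 hlong (max N.toNat 1)
  refine ⟨N + 2 * m, by omega, ?_⟩
  change c ^ Fintype.card (Fin 4) ≤ _
  refine H.pow_card_le_real_iInter
    (fun k => (isFinitelyIncreasing_topCrossing _ _).preimage _) hc.le fun k => ?_
  rw [H.real_preimage _ (isFinitelyIncreasing_topCrossing _ _)]
  set u : V := (-(N + 2 * m) - 1, N + m)
  calc c ≤ μ.real (connEvent (horizontalStrip (-m) m) 0 {(L, 0)}) := hmL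
    _ ≤ μ.real (connEvent (horizontalStrip N (N + 2 * m)) u {v | N + 2 * m < v.1}) := by
      refine H.real_connEvent_le (translate u) (zero_add u) (fun v hv => ?_) ?_
      · simp only [horizontalStrip, Set.mem_ofPred_eq, translate_apply, Prod.snd_add, u] at hv ⊢
        omega
      · rintro v rfl
        simp only [Set.mem_ofPred_eq, translate_apply, Prod.fst_add, u]
        omega
    _ ≤ μ.real (topCrossing N (N + 2 * m)) := by
      refine measureReal_mono (Set.subset_biUnion_of_mem (u := fun u =>
        connEvent (horizontalStrip N (N + 2 * m)) u {v | N + 2 * m < v.1}) ⟨⟨?_, ?_⟩, ?_⟩) <;>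
      simp only [u] <;> omega

end IsPercolationLaw

/-! ### Circuits block connections -/

/-- The rotation by a quarter turn about the origin when `(x, y)` encodes the vertex
`(x + 1 / 2, y + 1 / 2)` of the dual lattice. -/
def dualQuarterTurn : SqAdj ≃r SqAdj := quarterTurn.trans (translate (-1, 0))

@[simp] lemma dualQuarterTurn_apply (v : V) : dualQuarterTurn v = (-v.2 - 1, v.1) := by
  simp [dualQuarterTurn, sub_eq_add_neg]

/-- The vertices of the dual lattice inside the box of radius `m` centred at the origin; `(x, y)`
encodes the vertex `(x + 1 / 2, y + 1 / 2)`. -/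
def dualBox (m : ℤ) : Set V := {v | -m ≤ v.1 ∧ v.1 < m ∧ -m ≤ v.2 ∧ v.2 < m}

section Rotations

variable {a b c d x v : V} {m M : ℤ}

lemma quarterTurn_pow_mem_box (hv : v ∈ box m 0) (k : ℕ) : (quarterTurn ^ k) v ∈ box m 0 := by
  induction k with
  | zero => exact hv
  | succ k ih =>
    rw [pow_succ', RelIso.mul_apply]
    simp only [box, Prod.fst_zero, Prod.snd_zero, Set.mem_ofPred_eq, quarterTurn_apply] at ih ⊢
    omega

lemma dualQuarterTurn_pow_mem_dualBox (hv : v ∈ dualBox m) (k : ℕ) :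
    (dualQuarterTurn ^ k) v ∈ dualBox m := by
  induction k with
  | zero => exact hv
  | succ k ih =>
    rw [pow_succ', RelIso.mul_apply]
    simp only [dualBox, Set.mem_ofPred_eq, dualQuarterTurn_apply] at ih ⊢
    omega

lemma StarAdj.quarterTurn_pow (h : StarAdj a b) (k : ℕ) :
    StarAdj ((quarterTurn ^ k) a) ((quarterTurn ^ k) b) := by
  induction k with
  | zero => exact h
  | succ k ih =>
    rw [pow_succ', RelIso.mul_apply, RelIso.mul_apply]
    rw [starAdj_iff] at ih ⊢
    simp only [quarterTurn_apply]
    omega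

lemma exists_quarterTurn_pow_snd (hx : x ∈ box M 0) (hx' : x ∉ box (M - 1) 0) :
    ∃ k : Fin 4, ((quarterTurn ^ (k : ℕ)) x).2 = M := by
  simp only [box, Prod.fst_zero, Prod.snd_zero, Set.mem_ofPred_eq] at hx hx'
  obtain h | h | h | h : x.2 = M ∨ x.1 = M ∨ x.2 = -M ∨ x.1 = -M := by omega
  · exact ⟨0, by simpa using h⟩
  · exact ⟨1, by simpa using h⟩
  · exact ⟨2, by simp [pow_succ, h]⟩
  · exact ⟨3, by simp [pow_succ, h]⟩

lemma exists_dualQuarterTurn_pow_snd (hv : v ∈ dualBox M) (hvx : SqAdj v x) (hx : x ∉ dualBox M) :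
    ∃ k : Fin 4, ((dualQuarterTurn ^ (k : ℕ)) x).2 = M := by
  rw [sqAdj_iff] at hvx
  simp only [dualBox, Set.mem_ofPred_eq] at hv hx
  obtain h | h | h | h : x.2 = M ∨ x.1 = M ∨ x.2 = -M - 1 ∨ x.1 = -M - 1 := by omega
  · exact ⟨0, by simpa using h⟩
  · exact ⟨1, by simpa using h⟩
  · exact ⟨2, by simp [pow_succ, h]⟩
  · exact ⟨3, by simp [pow_succ, h]⟩

lemma bondOf_eq_dualBond_iff (h : SqAdj a b) (h' : SqAdj c d) :
    bondOf a b = dualBond (bondOf c d) ↔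
      a.1 + b.1 = c.1 + d.1 + 1 ∧ a.2 + b.2 = c.2 + d.2 + 1 := by
  rw [sqAdj_iff] at h h'
  by_cases h1 : c.1 = d.1 <;> by_cases h2 : a.1 = b.1 <;>
    simp [bondOf, dualBond, Prod.ext_iff, h1, h2] <;> omega

lemma bondOf_quarterTurn_pow_eq_iff (h : SqAdj a b) (h' : SqAdj c d) (k : ℕ) :
    bondOf ((quarterTurn ^ k) a) ((quarterTurn ^ k) b) =
        dualBond (bondOf ((dualQuarterTurn ^ k) c) ((dualQuarterTurn ^ k) d)) ↔
      bondOf a b = dualBond (bondOf c d) := by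
  induction k with
  | zero => rfl
  | succ k ih =>
    have hab := (quarterTurn ^ k).map_rel_iff.2 h
    have hcd := (dualQuarterTurn ^ k).map_rel_iff.2 h'
    rw [← ih, bondOf_eq_dualBond_iff hab hcd]
    simp only [pow_succ', RelIso.mul_apply]
    rw [bondOf_eq_dualBond_iff (quarterTurn.map_rel_iff.2 hab)
      (dualQuarterTurn.map_rel_iff.2 hcd)]
    simp only [quarterTurn_apply, dualQuarterTurn_apply]
    omega

end Rotations

section Blocking

variable {R : LatticeRel} {T : V → V → Prop} {N M : ℤ} {g : ℕ → V} {l : ℕ} {u v : V}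

lemma exists_isWalk_of_mem_topCrossing (h : R ∈ topCrossing N M) :
    ∃ (n : ℕ) (f : ℕ → V), IsWalk R f n ∧ (∀ i ≤ n, N ≤ (f i).2 ∧ (f i).2 ≤ M) ∧
      (f 0).1 < -M ∧ M < (f n).1 := by
  obtain ⟨u, ⟨hu, huM⟩, v, hv, huv⟩ := Set.mem_iUnion₂.1 h
  obtain ⟨n, f, hf, rfl, rfl, hfS⟩ := huv.exists_isWalk hu
  exact ⟨n, f, hf.mono fun _ _ h => h.1, hfS, huM, hv⟩

lemma exists_rel_of_mem_topCrossing (hR : IsLatticeSubgraph R) (h : R ∈ topCrossing N M)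
    (hg : IsWalk StarAdj g l) (hgM : ∀ j ≤ l, -M ≤ (g j).1 ∧ (g j).1 ≤ M) (hg0 : (g 0).2 ≤ N)
    (hgl : M ≤ (g l).2) : ∃ j ≤ l, ∃ a, R (g j) a := by
  obtain ⟨n, f, hf, hfy, hf0, hfn⟩ := exists_isWalk_of_mem_topCrossing h
  obtain ⟨i, hi, j, hj, hij⟩ := exists_eq_of_starWalk (hf.mono fun _ _ h => (hR _ _ h).1) hg
    (fun j hj => by have := hgM j hj; omega) (fun i hi => by have := hfy i hi; omega)
  refine ⟨j, hj, ?_⟩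
  rw [← hij]
  rcases hi.lt_or_eq with hi | rfl
  · exact ⟨_, hf i hi⟩
  · obtain ⟨i, rfl⟩ := Nat.exists_eq_succ_of_ne_zero (n := i) (by
      rintro rfl
      have := hgM 0 l.zero_le
      omega)
    exact ⟨_, (hR _ _ (hf i i.lt_succ_self)).2⟩

lemma exists_bondOf_eq_dualBond_of_mem_topCrossing (hR : IsLatticeSubgraph R)
    (h : R ∈ topCrossing N M) (hg : IsWalk SqAdj g l)
    (hgM : ∀ j ≤ l, -M - 1 ≤ (g j).1 ∧ (g j).1 ≤ M) (hg0 : (g 0).2 < N) (hgl : M ≤ (g l).2) :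
    ∃ a b, R a b ∧ ∃ j < l, bondOf a b = dualBond (bondOf (g j) (g (j + 1))) := by
  obtain ⟨n, f, hf, hfy, hf0, hfn⟩ := exists_isWalk_of_mem_topCrossing h
  obtain ⟨i, hi, j, hj, hij⟩ := exists_bondOf_eq_dualBond (hf.mono fun _ _ h => (hR _ _ h).1) hg
    (fun j hj => by have := hgM j hj; omega) (fun i hi => by have := hfy i hi; omega)
  exact ⟨_, _, hf i hi, j, hj, hij⟩

lemma IsLatticeSubgraph.preimage (hR : IsLatticeSubgraph R) (σ : SqAdj ≃r SqAdj) :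
    IsLatticeSubgraph (σ ⁻¹'o R) :=
  fun _ _ h => ⟨σ.map_rel_iff.1 (hR _ _ h).1, (hR _ _ h).2⟩

lemma exists_rel_of_mem_circuitEvent (hR : IsLatticeSubgraph R) (hNM : N < M)
    (h : R ∈ circuitEvent N M) (hT : ∀ a b, T a b → StarAdj a b) (hu : u ∈ box N 0)
    (hv : v ∉ box M 0) (huv : Relation.ReflTransGen T u v) :
    ∃ w a, Relation.ReflTransGen T u w ∧ R w a := by
  have hbox : box (M - 1) 0 ⊆ box M 0 := fun v hv => by
    simp only [box, Prod.fst_zero, Prod.snd_zero, Set.mem_ofPred_eq] at hv ⊢; omega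
  have huM : u ∈ box (M - 1) 0 := by
    simp only [box, Prod.fst_zero, Prod.snd_zero, Set.mem_ofPred_eq] at hu ⊢; omega
  obtain ⟨w, x, huw, hw, hwx, hx⟩ := exists_connIn_exit huv huM fun hv' => hv (hbox hv')
  have hxM : x ∈ box M 0 := by
    have := starAdj_iff.1 (hT _ _ hwx)
    simp only [box, Prod.fst_zero, Prod.snd_zero, Set.mem_ofPred_eq] at hw ⊢; omega
  have hux : ConnIn T (box M 0) u x := (huw.mono_set hbox).tail ⟨hwx, hbox hw, hxM⟩
  obtain ⟨l, g, hg, rfl, rfl, hgM⟩ := hux.exists_isWalk (hbox huM)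
  obtain ⟨k, hk⟩ := exists_quarterTurn_pow_snd hxM hx
  obtain ⟨j, hj, a, hja⟩ := exists_rel_of_mem_topCrossing (hR.preimage _) (Set.mem_iInter.1 h k)
    (g := fun j => (quarterTurn ^ (k : ℕ)) (g j)) (l := l)
    (fun j hj => (hT _ _ (hg j hj).1).quarterTurn_pow k)
    (fun j hj => by
      have := quarterTurn_pow_mem_box (hgM j hj) k
      simp only [box, Prod.fst_zero, Set.mem_ofPred_eq] at this; omega)
    (by have := quarterTurn_pow_mem_box hu k
        simp only [box, Prod.snd_zero, Set.mem_ofPred_eq] at this; omega) hk.ge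
  refine ⟨g j, (quarterTurn ^ (k : ℕ)).symm a,
    .mono (fun _ _ h => h.1) _ _ (hg.reflTransGen j.zero_le hj), ?_⟩
  simpa [Order.Preimage] using hja

lemma exists_bondOf_eq_dualBond_of_mem_circuitEvent (hR : IsLatticeSubgraph R) (hNM : N ≤ M)
    (h : R ∈ circuitEvent N M) (hT : ∀ a b, T a b → SqAdj a b) (hu : u ∈ dualBox N)
    (hv : v ∉ dualBox M) (huv : Relation.ReflTransGen T u v) :
    ∃ a b c d, R a b ∧ T c d ∧ bondOf a b = dualBond (bondOf c d) := by
  have huM : u ∈ dualBox M := by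
    simp only [dualBox, Set.mem_ofPred_eq] at hu ⊢; omega
  obtain ⟨w, x, huw, hw, hwx, hx⟩ := exists_connIn_exit huv huM hv
  have hux : ConnIn T (insert x (dualBox M)) u x := (huw.mono_set (Set.subset_insert x _)).tail
    ⟨hwx, Set.mem_insert_of_mem x hw, Set.mem_insert x _⟩
  obtain ⟨l, g, hg, rfl, rfl, hgM⟩ := hux.exists_isWalk (Set.mem_insert_of_mem _ huM)
  obtain ⟨k, hk⟩ := exists_dualQuarterTurn_pow_snd hw (hT _ _ hwx) hx
  have hgSq : IsWalk SqAdj (fun j => (dualQuarterTurn ^ (k : ℕ)) (g j)) l :=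
    fun j hj => (RelIso.map_rel_iff _).2 (hT _ _ (hg j hj).1)
  obtain ⟨a, b, hab, j, hj, hjab⟩ := exists_bondOf_eq_dualBond_of_mem_topCrossing (hR.preimage _)
    (Set.mem_iInter.1 h k) hgSq
    (fun j hj => by
      have hwk := dualQuarterTurn_pow_mem_dualBox hw k
      have hwxk := sqAdj_iff.1 ((dualQuarterTurn ^ (k : ℕ)).map_rel_iff.2 (hT _ _ hwx))
      rcases hgM j hj with hgj | hgj
      · rw [hgj]
        simp only [dualBox, Set.mem_ofPred_eq] at hwk; omega
      · have := dualQuarterTurn_pow_mem_dualBox hgj k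
        simp only [dualBox, Set.mem_ofPred_eq] at this; omega)
    (by have := dualQuarterTurn_pow_mem_dualBox hu k
        simp only [dualBox, Set.mem_ofPred_eq] at this; omega) hk.ge
  refine ⟨_, _, _, _, hab, (hg j hj).1, ?_⟩
  rw [← bondOf_quarterTurn_pow_eq_iff (hR _ _ hab).1 (hT _ _ (hg j hj).1) k]
  simpa using hjab

end Blocking

/-! ### Bernoulli product measures -/

section Bernoulli

open unitInterval ProbabilityTheory

variable {ι κ : Type*}

/-- The law of independent Bernoulli variables with parameters `w i`, `true` being a success. -/
noncomputable def bernoulliProduct (w : ι → I) : Measure (ι → Bool) :=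
  Measure.infinitePi fun i => bernoulliMeasure true false (w i)

instance (w : ι → I) : IsProbabilityMeasure (bernoulliProduct w) := by
  unfold bernoulliProduct; infer_instance

lemma bernoulliProduct_real_pi (w : ι → I) (U : Finset ι) (y : ι → Bool) :
    (bernoulliProduct w).real (Set.pi U fun i => {y i}) =
      ∏ i ∈ U, if y i then (w i : ℝ) else 1 - w i := by
  rw [bernoulliProduct, measureReal_def,
    Measure.infinitePi_pi _ fun _ _ => MeasurableSet.of_discrete, ENNReal.toReal_prod]
  refine Finset.prod_congr rfl fun i _ => ?_
  rw [← measureReal_def]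
  cases y i
  · exact (bernoulliMeasure_real_apply_of_notMem_of_mem _ .of_discrete (by simp) (by simp)).trans
      (by simp)
  · exact (bernoulliMeasure_real_apply_of_mem_of_notMem _ .of_discrete (by simp) (by simp)).trans
      (by simp)

lemma measurable_comp_index (f : κ → ι) : Measurable fun x : ι → Bool => x ∘ f :=
  measurable_pi_iff.2 fun _ => measurable_pi_apply _

lemma bernoulliProduct_map_comp (w : ι → I) {f : κ → ι} (hf : Function.Injective f) :
    (bernoulliProduct w).map (fun x => x ∘ f) = bernoulliProduct (w ∘ f) :=
  Measure.map_infinitePi_infinitePi_of_inj hf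

lemma bernoulliProduct_map_comp_eq_of_ker_eq (t : I) (g₁ g₂ : κ → ι)
    (h : ∀ a b, g₁ a = g₁ b ↔ g₂ a = g₂ b) :
    (bernoulliProduct fun _ : ι => t).map (fun y => y ∘ g₁) =
      (bernoulliProduct fun _ : ι => t).map fun y => y ∘ g₂ := by
  suffices H : ∀ g : κ → ι, (bernoulliProduct fun _ : ι => t).map (fun y => y ∘ g) =
      (bernoulliProduct fun _ : Quotient (Setoid.ker g) => t).map fun y => y ∘ Quotient.mk _ by
    have hker : Setoid.ker g₁ = Setoid.ker g₂ := Setoid.ext h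
    rw [H g₁, H g₂, hker]
  intro g
  have hinj : Function.Injective (Quotient.lift g fun _ _ => id : Quotient (Setoid.ker g) → ι) :=
    Setoid.kerLift_injective g
  change _ = (bernoulliProduct ((fun _ : ι => t) ∘ Quotient.lift g fun _ _ => id)).map _
  rw [← bernoulliProduct_map_comp _ hinj,
    Measure.map_map (measurable_comp_index _) (measurable_comp_index _)]
  rfl

lemma measurable_sumElim :
    Measurable fun p : (ι → Bool) × (κ → Bool) => (Sum.elim p.1 p.2 : ι ⊕ κ → Bool) := by
  refine measurable_pi_iff.2 fun i => ?_
  cases i with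
  | inl i => exact (measurable_pi_apply i).comp measurable_fst
  | inr i => exact (measurable_pi_apply i).comp measurable_snd

lemma bernoulliProduct_prod_map_sumElim (w₁ : ι → I) (w₂ : κ → I) :
    ((bernoulliProduct w₁).prod (bernoulliProduct w₂)).map (fun p => Sum.elim p.1 p.2) =
      bernoulliProduct (Sum.elim w₁ w₂) := by
  refine Measure.eq_infinitePi _ fun s t ht => ?_
  rw [Measure.map_apply measurable_sumElim (MeasurableSet.pi s.countable_toSet fun i _ => ht i)]
  have hprod : (fun p : (ι → Bool) × (κ → Bool) => (Sum.elim p.1 p.2 : ι ⊕ κ → Bool)) ⁻¹'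
      (Set.pi s t) = (Set.pi s.toLeft fun i => t (Sum.inl i)) ×ˢ
        (Set.pi s.toRight fun i => t (Sum.inr i)) := by
    ext p
    simp only [Set.mem_preimage, Set.mem_pi, Set.mem_prod, Finset.mem_coe, Finset.mem_toLeft,
      Finset.mem_toRight, Sum.forall, Sum.elim_inl, Sum.elim_inr]
  rw [hprod, Measure.prod_prod, bernoulliProduct, bernoulliProduct,
    Measure.infinitePi_pi _ fun i _ => ht _, Measure.infinitePi_pi _ fun i _ => ht _]
  conv_rhs => rw [← Finset.toLeft_disjSum_toRight (u := s), Finset.prod_disjSum]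
  rfl

end Bernoulli

/-! ### Positive association by exploration -/

section Exploration

open Filter Topology unitInterval

variable {ι : Type*}

/-- The successes of the configuration `b` among the elements of `U`. -/
def successes (U : Finset ι) (b : ι → Bool) : Finset ι := U.filter fun i => b i

lemma mem_successes {U : Finset ι} {b : ι → Bool} {i : ι} : i ∈ successes U b ↔ i ∈ U ∧ b i :=
  Finset.mem_filter

lemma measurable_successes {β : Type*} [MeasurableSpace β] (U : Finset ι) (F : Finset ι → β) :
    Measurable fun b : ι → Bool => F (successes U b) := by
  let G : (U → Bool) → β := fun y =>
    F ((Finset.univ.filter fun i => y i).map (Function.Embedding.subtype _))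
  have hG : ∀ b : ι → Bool, F (successes U b) = G (U.restrict b) := by
    intro b
    refine congrArg F (Finset.ext fun i => mem_successes.trans ⟨fun h => ?_, fun h => ?_⟩)
    · exact Finset.mem_map.2 ⟨⟨i, h.1⟩, Finset.mem_filter.2 ⟨Finset.mem_univ _, h.2⟩, rfl⟩
    · obtain ⟨j, hj, rfl⟩ := Finset.mem_map.1 h
      exact ⟨j.2, (Finset.mem_filter.1 hj).2⟩
  simp_rw [hG]
  exact (measurable_of_countable G).comp (Finset.measurable_restrict U)

variable [DecidableEq ι]

/-- The expectation of `F (O ∪ η)` for a random subset `η` of `U` that contains each `i`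
independently with probability `w i`. -/
def bernoulliExp (w : ι → I) (U O : Finset ι) (F : Finset ι → ℝ) : ℝ :=
  ∑ η ∈ U.powerset, (∏ i ∈ U, if i ∈ η then (w i : ℝ) else 1 - w i) * F (O ∪ η)

lemma bernoulliExp_insert (w : ι → I) {U : Finset ι} (O : Finset ι) (F : Finset ι → ℝ) {e : ι}
    (he : e ∉ U) : bernoulliExp w (insert e U) O F =
      (1 - w e) * bernoulliExp w U O F + w e * bernoulliExp w U (insert e O) F := by
  unfold bernoulliExp
  rw [Finset.sum_powerset_insert he, Finset.mul_sum, Finset.mul_sum]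
  congr 1 <;> refine Finset.sum_congr rfl fun η hη => ?_
  · rw [Finset.prod_insert he, if_neg fun h => he (Finset.mem_powerset.1 hη h), mul_assoc]
  · have hprod : ∏ i ∈ U, (if i ∈ insert e η then (w i : ℝ) else 1 - w i) =
        ∏ i ∈ U, (if i ∈ η then (w i : ℝ) else 1 - w i) :=
      Finset.prod_congr rfl fun i hi => by
        simp only [Finset.mem_insert, ne_of_mem_of_not_mem hi he, false_or]
    rw [Finset.prod_insert he, if_pos (Finset.mem_insert_self _ _), hprod,
      Finset.union_insert, Finset.insert_union, mul_assoc]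

lemma bernoulliExp_mono (w : ι → I) {U O O' : Finset ι} {F G : Finset ι → ℝ}
    (h : ∀ η ⊆ U, F (O ∪ η) ≤ G (O' ∪ η)) : bernoulliExp w U O F ≤ bernoulliExp w U O' G := by
  refine Finset.sum_le_sum fun η hη =>
    mul_le_mul_of_nonneg_left (h η (Finset.mem_powerset.1 hη)) (Finset.prod_nonneg fun i _ => ?_)
  split_ifs
  exacts [(w i).2.1, sub_nonneg.2 (w i).2.2]

/-- The variables can be examined one at a time so that, `O` being the successes already found and
`U` the variables not yet examined, there is always a next variable `e` whose outcome affects `X`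
in a direction that the further outcomes `η` cannot reverse. -/
def HasMonotoneExploration {α : Type*} [Preorder α] (X : Finset ι → α) : Prop :=
  ∀ O U : Finset ι, U.Nonempty → ∃ e ∈ U,
    (∀ η ⊆ U.erase e, X (O ∪ η) ≤ X (insert e O ∪ η)) ∨
    (∀ η ⊆ U.erase e, X (insert e O ∪ η) ≤ X (O ∪ η))

lemma HasMonotoneExploration.comp_monotone {α β : Type*} [Preorder α] [Preorder β]
    {X : Finset ι → α} (hX : HasMonotoneExploration X) {f : α → β} (hf : Monotone f) :
    HasMonotoneExploration fun S => f (X S) := fun O U hU =>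
  (hX O U hU).imp fun _ h => ⟨h.1, h.2.imp (fun h η hη => hf (h η hη)) fun h η hη => hf (h η hη)⟩

lemma hasMonotoneExploration_of_monotone {α : Type*} [Preorder α] {X : Finset ι → α}
    (hX : Monotone X) : HasMonotoneExploration X := fun O _ hU =>
  hU.imp fun e he => ⟨he, .inl fun _ _ =>
    hX (Finset.union_subset_union_left (Finset.subset_insert e O))⟩

theorem HasMonotoneExploration.bernoulliExp_mul_le {α : Type*} [Preorder α] {X : Finset ι → α}
    (hX : HasMonotoneExploration X) (w : ι → I) {f g : α → ℝ} (hf : Monotone f) (hg : Monotone g)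
    (U O : Finset ι) :
    bernoulliExp w U O (fun S => f (X S)) * bernoulliExp w U O (fun S => g (X S)) ≤
      bernoulliExp w U O fun S => f (X S) * g (X S) := by
  induction hn : U.card generalizing U O with
  | zero => simp [Finset.card_eq_zero.1 hn, bernoulliExp]
  | succ n ih =>
    obtain ⟨e, he, hmono⟩ := hX O U (Finset.card_pos.1 (hn ▸ n.succ_pos))
    have hcard : (U.erase e).card = n := by rw [Finset.card_erase_of_mem he]; omega
    have hU : U = insert e (U.erase e) := (Finset.insert_erase he).symm
    have hins := fun F => bernoulliExp_insert w O F (Finset.notMem_erase e U)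
    have hclosed := ih (U.erase e) O hcard
    have hopen := ih (U.erase e) (insert e O) hcard
    rw [hU, hins, hins, hins]
    set f₀ := bernoulliExp w (U.erase e) O fun S => f (X S)
    set f₁ := bernoulliExp w (U.erase e) (insert e O) fun S => f (X S)
    set g₀ := bernoulliExp w (U.erase e) O fun S => g (X S)
    set g₁ := bernoulliExp w (U.erase e) (insert e O) fun S => g (X S)
    have hsame : 0 ≤ (f₁ - f₀) * (g₁ - g₀) := by
      rcases hmono with h | h
      · exact mul_nonneg (sub_nonneg.2 (bernoulliExp_mono w fun η hη => hf (h η hη)))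
          (sub_nonneg.2 (bernoulliExp_mono w fun η hη => hg (h η hη)))
      · exact mul_nonneg_of_nonpos_of_nonpos
          (sub_nonpos.2 (bernoulliExp_mono w fun η hη => hf (h η hη)))
          (sub_nonpos.2 (bernoulliExp_mono w fun η hη => hg (h η hη)))
    have h0 : (0 : ℝ) ≤ w e := (w e).2.1
    have h1 : (0 : ℝ) ≤ 1 - w e := sub_nonneg.2 (w e).2.2
    nlinarith [mul_nonneg (mul_nonneg h0 h1) hsame, mul_le_mul_of_nonneg_left hclosed h1,
      mul_le_mul_of_nonneg_left hopen h0]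

/-- The configuration whose successes are the elements of `S`. -/
def ofFinset (S : Finset ι) : ι → Bool := fun i => decide (i ∈ S)

lemma successes_eq_iff {U η : Finset ι} (hη : η ⊆ U) {b : ι → Bool} :
    successes U b = η ↔ b ∈ Set.pi U fun i => {ofFinset η i} := by
  constructor
  · rintro rfl i hi
    rw [Set.mem_singleton_iff, ofFinset, Bool.eq_iff_iff, decide_eq_true_iff, mem_successes,
      and_iff_right (Finset.mem_coe.1 hi)]
  · refine fun h => Finset.ext fun i => mem_successes.trans ⟨fun hi => ?_, fun hi => ⟨hη hi, ?_⟩⟩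
    · exact of_decide_eq_true ((h i hi.1).symm.trans hi.2)
    · exact (h i (hη hi)).trans (decide_eq_true hi)

lemma integral_successes (w : ι → I) (U : Finset ι) (F : Finset ι → ℝ) :
    ∫ b, F (successes U b) ∂bernoulliProduct w = bernoulliExp w U ∅ F := by
  have hsum : ∀ b, F (successes U b) = ∑ η ∈ U.powerset,
      (Set.pi U fun i => {ofFinset η i}).indicator (fun _ => F η) b := by
    intro b
    rw [Finset.sum_eq_single_of_mem (successes U b)
      (Finset.mem_powerset.2 (Finset.filter_subset _ _)), Set.indicator_of_mem]
    · exact (successes_eq_iff (Finset.filter_subset _ _)).1 rfl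
    · intro η hη hne
      exact Set.indicator_of_notMem
        (fun h => hne ((successes_eq_iff (Finset.mem_powerset.1 hη)).2 h).symm) _
  have hmeas : ∀ η, MeasurableSet (Set.pi (U : Set ι) fun i => {ofFinset η i}) := fun η =>
    MeasurableSet.pi U.countable_toSet fun _ _ => measurableSet_singleton _
  simp_rw [hsum]
  rw [integral_finsetSum _ fun η _ => (integrable_const _).indicator (hmeas η)]
  refine Finset.sum_congr rfl fun η _ => ?_
  rw [integral_indicator_const _ (hmeas η), bernoulliProduct_real_pi, smul_eq_mul,
    Finset.empty_union]
  simp only [ofFinset, decide_eq_true_eq]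

lemma tendsto_bernoulliExp [Countable ι] (w : ι → I) {F : (ι → Bool) → ℝ} {C : ℝ}
    (hC : ∀ b, ‖F b‖ ≤ C)
    (hF : ∀ b, ∀ᶠ U in atTop, F (ofFinset (successes U b)) = F b) :
    Tendsto (fun U => bernoulliExp w U ∅ fun S => F (ofFinset S)) atTop
      (𝓝 (∫ b, F b ∂bernoulliProduct w)) := by
  simp_rw [← integral_successes]
  exact tendsto_integral_filter_of_dominated_convergence (fun _ => C)
    (.of_forall fun U => (measurable_successes U fun S => F (ofFinset S)).aestronglyMeasurable)
    (.of_forall fun _ => .of_forall fun _ => hC _) (integrable_const _)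
    (.of_forall fun b => tendsto_nhds_of_eventually_eq (hF b))

variable {X : (ι → Bool) → LatticeRel}

/-- The relations whose restriction to the finite set `T` of pairs lies in `Q`. -/
def truncation (Q : Set LatticeRel) (T : Finset (V × V)) : Set LatticeRel :=
  {R | (fun u v => R u v ∧ (u, v) ∈ T) ∈ Q}

lemma IsFinitelyIncreasing.truncation {Q : Set LatticeRel} (hQ : IsFinitelyIncreasing Q)
    (T : Finset (V × V)) : IsFinitelyIncreasing (truncation Q T) where
  isUpperSet _ _ h hR := hQ.isUpperSet (fun _ _ huv => ⟨h _ _ huv.1, huv.2⟩) hR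
  exists_finset R hR := by
    classical
    obtain ⟨S, hS, hSQ⟩ := hQ.exists_finset _ hR
    exact ⟨S, fun e he => (hS e he).1, hQ.isUpperSet (fun u v huv => ⟨huv, (hS _ huv).2⟩) hSQ⟩

lemma monotone_truncation {Q : Set LatticeRel} (hQ : IsFinitelyIncreasing Q) :
    Monotone (truncation Q) := fun _ _ hT _ hR =>
  hQ.isUpperSet (fun _ _ h => ⟨h.1, hT h.2⟩) hR

lemma iUnion_truncation {Q : Set LatticeRel} (hQ : IsFinitelyIncreasing Q) :
    ⋃ T, truncation Q T = Q := by
  refine Set.Subset.antisymm (Set.iUnion_subset fun T R hR =>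
    hQ.isUpperSet (fun _ _ h => h.1) hR) fun R hR => ?_
  obtain ⟨T, hT, hTQ⟩ := hQ.exists_finset R hR
  exact Set.mem_iUnion.2 ⟨T, hQ.isUpperSet (fun u v h => ⟨hT _ h, h⟩) hTQ⟩

lemma eventually_mem_truncation_iff (Q : Set LatticeRel)
    (hlim : ∀ b u v, ∀ᶠ U in atTop, (X (ofFinset (successes U b)) u v ↔ X b u v))
    (T : Finset (V × V)) (b : ι → Bool) :
    ∀ᶠ U in atTop, (X (ofFinset (successes U b)) ∈ truncation Q T ↔ X b ∈ truncation Q T) := by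
  have hT : ∀ᶠ U in atTop, ∀ e ∈ T, (X (ofFinset (successes U b)) e.1 e.2 ↔ X b e.1 e.2) :=
    (Filter.eventually_all_finset T).2 fun e _ => hlim b e.1 e.2
  filter_upwards [hT] with U hU
  refine iff_of_eq (congrArg (· ∈ Q) (funext₂ fun u v => propext ?_))
  exact and_congr_left fun huv => hU (u, v) huv

variable [Countable ι]

lemma mul_le_inter_truncation (w : ι → I) (hX : Measurable X)
    (hE : HasMonotoneExploration fun S => X (ofFinset S))
    (hlim : ∀ b u v, ∀ᶠ U in atTop, (X (ofFinset (successes U b)) u v ↔ X b u v))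
    {Q Q' : Set LatticeRel} (hQ : IsFinitelyIncreasing Q) (hQ' : IsFinitelyIncreasing Q')
    (T : Finset (V × V)) :
    ((bernoulliProduct w).map X).real (truncation Q T) *
        ((bernoulliProduct w).map X).real (truncation Q' T) ≤
      ((bernoulliProduct w).map X).real (truncation Q T ∩ truncation Q' T) := by
  have hind : ∀ Q : Set LatticeRel, IsFinitelyIncreasing Q →
      Monotone ((truncation Q T).indicator (1 : LatticeRel → ℝ)) := fun Q hQ _ _ h =>
    Set.indicator_apply_le'
      (fun hR => (Set.indicator_of_mem ((hQ.truncation T).isUpperSet h hR) 1).ge)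
      fun _ => Set.indicator_apply_nonneg fun _ => zero_le_one
  have htend : ∀ {A : Set LatticeRel}, MeasurableSet A →
      (∀ b, ∀ᶠ U in atTop, (X (ofFinset (successes U b)) ∈ A ↔ X b ∈ A)) →
      Tendsto (fun U => bernoulliExp w U ∅ fun S => A.indicator 1 (X (ofFinset S))) atTop
        (𝓝 (((bernoulliProduct w).map X).real A)) := by
    intro A hA hev
    rw [← integral_indicator_one hA, integral_map hX.aemeasurable
      (stronglyMeasurable_one.indicator hA).aestronglyMeasurable]
    refine tendsto_bernoulliExp w (F := fun b => A.indicator 1 (X b)) (C := 1)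
      (fun b => ?_) fun b => ?_
    · exact (norm_indicator_le_norm_self _ _).trans (by simp)
    · filter_upwards [hev b] with U hU
      exact Set.indicator_eq_indicator hU rfl
  have hev := fun Q => eventually_mem_truncation_iff Q hlim T
  refine le_of_tendsto_of_tendsto'
    ((htend (hQ.truncation T).measurableSet (hev Q)).mul
      (htend (hQ'.truncation T).measurableSet (hev Q')))
    (htend ((hQ.truncation T).measurableSet.inter (hQ'.truncation T).measurableSet) fun b => by
      filter_upwards [hev Q b, hev Q' b] with U hU hU' using and_congr hU hU') fun U => ?_
  rw [Set.inter_indicator_one]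
  exact hE.bernoulliExp_mul_le w (hind Q hQ) (hind Q' hQ') U ∅

lemma measurableSet_isLatticeSubgraph : MeasurableSet {R | IsLatticeSubgraph R} := by
  have happly : ∀ a b, Measurable fun R : LatticeRel => R a b := fun a b =>
    (measurable_pi_apply b).comp (measurable_pi_apply a)
  exact measurableSet_setOfPred.2 (.forall fun a => .forall fun b =>
    (happly a b).imp (measurable_const.and (happly b a)))

theorem isPercolationLaw_map (w : ι → I) (hX : Measurable X)
    (hlat : ∀ b, IsLatticeSubgraph (X b))
    (hE : HasMonotoneExploration fun S => X (ofFinset S))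
    (hlim : ∀ b u v, ∀ᶠ U in atTop, (X (ofFinset (successes U b)) u v ↔ X b u v))
    (hinv : ∀ φ : SqAdj ≃r SqAdj, ((bernoulliProduct w).map X).map (fun R => φ ⁻¹'o R) =
      (bernoulliProduct w).map X) :
    IsPercolationLaw ((bernoulliProduct w).map X) where
  toIsProbabilityMeasure := Measure.isProbabilityMeasure_map hX.aemeasurable
  ae_isLatticeSubgraph :=
    (ae_map_iff hX.aemeasurable measurableSet_isLatticeSubgraph).2 (.of_forall hlat)
  map_preimage := hinv
  mul_le_inter Q Q' hQ hQ' := by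
    have := Measure.isProbabilityMeasure_map (μ := bernoulliProduct w) hX.aemeasurable
    have htend : ∀ {A : Finset (V × V) → Set LatticeRel}, Monotone A →
        Tendsto (fun T => ((bernoulliProduct w).map X).real (A T)) atTop
          (𝓝 (((bernoulliProduct w).map X).real (⋃ T, A T))) := fun hA =>
      (ENNReal.tendsto_toReal (measure_ne_top _ _)).comp (tendsto_measure_iUnion_atTop hA)
    have hmono := monotone_truncation hQ
    have hmono' := monotone_truncation hQ'
    have hlimit := le_of_tendsto_of_tendsto' ((htend hmono).mul (htend hmono'))
      (htend fun _ _ hT => Set.inter_subset_inter (hmono hT) (hmono' hT))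
      (mul_le_inter_truncation w hX hE hlim hQ hQ')
    rwa [Set.iUnion_inter_of_monotone hmono hmono', iUnion_truncation hQ, iUnion_truncation hQ']
      at hlimit

end Exploration

/-! ### Exploration of the colours -/

section ClusterRep

variable {η η' : EdgeCfg} {u v w : V}

lemma Conn.symm (hη : ∀ a b, η a b → η b a) (h : Conn η u v) : Conn η v u :=
  have : Std.Symm fun a b => η a b = true := ⟨hη⟩
  Std.Symm.symm (r := Relation.ReflTransGen fun a b => η a b = true) _ _ h

lemma Conn.mono (hle : η ≤ η') (h : Conn η u v) : Conn η' u v :=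
  Relation.ReflTransGen.mono (fun a b => hle a b) _ _ h

lemma conn_clusterRep_and_encode_le (η : EdgeCfg) (v : V) : Conn η v (clusterRep η v) ∧
    ∀ w, Conn η v w → Encodable.encode (clusterRep η v) ≤ Encodable.encode w := by
  have hne : (Encodable.encode '' pCluster η v).Nonempty := ⟨_, v, .refl, rfl⟩
  obtain ⟨w, hw, hwmin⟩ := Nat.sInf_mem hne
  have hrep : clusterRep η v = w := by
    rw [clusterRep, ← hwmin, Encodable.encodek, Option.getD_some]
  rw [hrep, hwmin]
  exact ⟨hw, fun z hz => Nat.sInf_le ⟨z, hz, rfl⟩⟩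

lemma conn_clusterRep (η : EdgeCfg) (v : V) : Conn η v (clusterRep η v) :=
  (conn_clusterRep_and_encode_le η v).1

lemma encode_clusterRep_le (h : Conn η v w) :
    Encodable.encode (clusterRep η v) ≤ Encodable.encode w :=
  (conn_clusterRep_and_encode_le η v).2 w h

lemma clusterRep_eq_of_conn_of_le (h : Conn η v w)
    (hmin : ∀ z, Conn η v z → Encodable.encode w ≤ Encodable.encode z) : clusterRep η v = w :=
  Encodable.encode_injective (le_antisymm (encode_clusterRep_le h) (hmin _ (conn_clusterRep η v)))

lemma clusterRep_congr (h : ∀ z, Conn η v z ↔ Conn η' w z) : clusterRep η v = clusterRep η' w :=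
  clusterRep_eq_of_conn_of_le ((h _).2 (conn_clusterRep η' w)) fun z hz =>
    encode_clusterRep_le ((h z).1 hz)

lemma clusterRep_eq_iff (hη : ∀ a b, η a b → η b a) :
    clusterRep η u = clusterRep η v ↔ Conn η u v := by
  refine ⟨fun h => ?_, fun h => clusterRep_congr fun z => ⟨(h.symm hη).trans, h.trans⟩⟩
  exact (h ▸ conn_clusterRep η u).trans ((conn_clusterRep η v).symm hη)

lemma clusterRep_eq_of_le (hle : η ≤ η') (h : Conn η v (clusterRep η' v)) :
    clusterRep η v = clusterRep η' v :=
  clusterRep_eq_of_conn_of_le h fun _ hz => encode_clusterRep_le (hz.mono hle)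

lemma clusterRep_eq_of_encode_le (hη : ∀ a b, η a b → η b a) (hle : η ≤ η')
    (h : ∀ a b, η' a b → η a b ∨
      Encodable.encode (clusterRep η u) ≤ Encodable.encode (clusterRep η b)) :
    clusterRep η' u = clusterRep η u := by
  refine clusterRep_eq_of_conn_of_le ((conn_clusterRep η u).mono hle) fun z hz => ?_
  have hlabel : Encodable.encode (clusterRep η u) ≤ Encodable.encode (clusterRep η z) := by
    induction hz with
    | refl => exact le_rfl
    | tail _ hab ih =>
      refine (h _ _ hab).elim (fun hab' => ?_) id
      rwa [← (clusterRep_eq_iff hη).2 (.single hab')]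
  exact hlabel.trans (encode_clusterRep_le .refl)

lemma clusterRep_eq_of_forall_conn (hle : η ≤ η') (h : ∀ a b, Conn η' v a → η' a b → η a b) :
    clusterRep η v = clusterRep η' v := by
  refine clusterRep_congr fun z => ⟨.mono hle, fun hz => ?_⟩
  induction hz with
  | refl => exact .refl
  | tail hva hab ih => exact ih.tail (h _ _ hva hab)

end ClusterRep

/-- The subgraph of the square lattice formed by the open bonds of `ω`. -/
def openBonds (ω : Bond → Bool) : LatticeRel := fun u v => SqAdj u v ∧ ω (bondOf u v)

/-- The open bonds of `ω`, as an edge configuration. -/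
noncomputable def bondCfg (ω : Bond → Bool) : EdgeCfg :=
  fun u v => boolOf (SqAdj u v) && ω (bondOf u v)

/-- The colours obtained by giving each cluster of open bonds the colour of its representative. -/
noncomputable def clusterColour (ω : Bond → Bool) (y : V → Bool) : ColourCfg :=
  fun v => y (clusterRep (bondCfg ω) v)

/-- The colours, as a function of the states of the bonds and the colours of the vertices that
serve as representatives. -/
noncomputable def jointColour (b : Bond ⊕ V → Bool) : ColourCfg :=
  clusterColour (b ∘ Sum.inl) (b ∘ Sum.inr)

/-- The black nearest-neighbour pairs of a colour configuration. -/
def blackRel (ξ : ColourCfg) : LatticeRel := within SqAdj {v | ξ v = true}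

lemma boolOf_eq_true_iff {P : Prop} : boolOf P = true ↔ P :=
  @decide_eq_true_iff P (Classical.propDecidable P)

section Bonds

variable {ω ω' : Bond → Bool} {a b u v : V}

lemma bondCfg_eq_true_iff : bondCfg ω u v = true ↔ openBonds ω u v := by
  rw [bondCfg, Bool.and_eq_true, boolOf_eq_true_iff, openBonds]

lemma conn_bondCfg_iff : Conn (bondCfg ω) u v ↔ Relation.ReflTransGen (openBonds ω) u v := by
  simp only [Conn, bondCfg_eq_true_iff]

lemma openBonds_mono : Monotone openBonds := fun _ _ h _ _ huv => ⟨huv.1, h _ huv.2⟩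

lemma bondCfg_mono : Monotone bondCfg := fun _ _ h _ _ huv =>
  bondCfg_eq_true_iff.2 (openBonds_mono h _ _ (bondCfg_eq_true_iff.1 huv))

lemma isLatticeSubgraph_openBonds (ω : Bond → Bool) : IsLatticeSubgraph (openBonds ω) :=
  fun a b h => ⟨h.1, h.1.symm, bondOf_comm a b ▸ h.2⟩

lemma bondCfg_symm (ω : Bond → Bool) (a b : V) (h : bondCfg ω a b) : bondCfg ω b a :=
  bondCfg_eq_true_iff.2 (isLatticeSubgraph_openBonds ω a b (bondCfg_eq_true_iff.1 h)).2

lemma blackRel_mono : Monotone blackRel := fun _ _ h _ _ huv =>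
  ⟨huv.1, h _ huv.2.1, h _ huv.2.2⟩

lemma isLatticeSubgraph_blackRel (ξ : ColourCfg) : IsLatticeSubgraph (blackRel ξ) :=
  fun _ _ h => ⟨h.1, h.1.symm, h.2.2, h.2.1⟩

/-- The endpoint of the bond `e` other than `e.1`. -/
def bondEnd (e : Bond) : V := if e.2 then (e.1.1, e.1.2 + 1) else (e.1.1 + 1, e.1.2)

lemma sqAdj_bondEnd (e : Bond) : SqAdj e.1 (bondEnd e) := by
  obtain ⟨⟨x, y⟩, vertical⟩ := e
  cases vertical <;> simp [bondEnd, SqAdj]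

lemma bondOf_bondEnd (e : Bond) : bondOf e.1 (bondEnd e) = e := by
  obtain ⟨⟨x, y⟩, vertical⟩ := e
  cases vertical
  exacts [bondOf_right x y, bondOf_up x y]

lemma SqAdj.eq_bondEnd_or (h : SqAdj a b) :
    a = (bondOf a b).1 ∧ b = bondEnd (bondOf a b) ∨
      b = (bondOf a b).1 ∧ a = bondEnd (bondOf a b) := by
  rw [sqAdj_iff] at h
  simp only [bondOf, bondEnd, decide_eq_true_eq, Prod.ext_iff]
  split_ifs <;> grind

end Bonds

section Exploration

open Filter

/-- The bonds of `S`, as an edge configuration. -/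
noncomputable def finsetCfg (S : Finset (Bond ⊕ V)) : EdgeCfg := bondCfg (ofFinset S ∘ Sum.inl)

variable {S O U : Finset (Bond ⊕ V)} {u v z : V} {e : Bond}

lemma finsetCfg_eq_true_iff : finsetCfg S u v = true ↔ SqAdj u v ∧ Sum.inl (bondOf u v) ∈ S := by
  rw [finsetCfg, bondCfg_eq_true_iff, openBonds, Function.comp_apply, ofFinset,
    decide_eq_true_iff]

lemma finsetCfg_symm (S : Finset (Bond ⊕ V)) (a b : V) : finsetCfg S a b → finsetCfg S b a :=
  bondCfg_symm _ a b

lemma finsetCfg_mono : Monotone finsetCfg := fun _ _ h _ _ huv =>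
  finsetCfg_eq_true_iff.2 ((finsetCfg_eq_true_iff.1 huv).imp_right fun hS => h hS)

lemma jointColour_ofFinset (S : Finset (Bond ⊕ V)) (v : V) :
    jointColour (ofFinset S) v = decide (Sum.inr (clusterRep (finsetCfg S) v) ∈ S) := rfl

/-- Among the remaining bonds take one with an endpoint whose cluster has the least representative:
the others cannot change that representative. -/
lemma exists_bond_forall_clusterRep_eq (hU : U.Nonempty) (hV : ∀ v, Sum.inr v ∉ U)
    (O : Finset (Bond ⊕ V)) : ∃ e, Sum.inl e ∈ U ∧ ∃ u, (u = e.1 ∨ u = bondEnd e) ∧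
      ∀ S, O ⊆ S → S ⊆ O ∪ U → clusterRep (finsetCfg S) u = clusterRep (finsetCfg O) u := by
  let label : V → ℕ := fun v => Encodable.encode (clusterRep (finsetCfg O) v)
  let bondLabel : Bond ⊕ V → ℕ := Sum.elim (fun e => min (label e.1) (label (bondEnd e))) 0
  obtain ⟨e | v, he, hmin⟩ := Finset.exists_min_image U bondLabel hU
  swap
  · exact absurd he (hV v)
  have hu : ∃ u, (u = e.1 ∨ u = bondEnd e) ∧ label u = bondLabel (Sum.inl e) :=
    (min_choice (label e.1) (label (bondEnd e))).elim (fun h => ⟨_, .inl rfl, h.symm⟩)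
      fun h => ⟨_, .inr rfl, h.symm⟩
  obtain ⟨u, hue, hu⟩ := hu
  refine ⟨e, he, u, hue, fun S hOS hSU =>
    clusterRep_eq_of_encode_le (finsetCfg_symm O) (finsetCfg_mono hOS) fun a b hab => ?_⟩
  obtain ⟨hadj, hbond⟩ := finsetCfg_eq_true_iff.1 hab
  rcases Finset.mem_union.1 (hSU hbond) with hO | hU
  · exact .inl (finsetCfg_eq_true_iff.2 ⟨hadj, hO⟩)
  · right
    calc label u ≤ min (label (bondOf a b).1) (label (bondEnd (bondOf a b))) :=
          hu.trans_le (hmin _ hU)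
      _ ≤ label b := by
        rcases hadj.eq_bondEnd_or with h | h
        · exact (min_le_right _ _).trans_eq (congrArg label h.2.symm)
        · exact (min_le_left _ _).trans_eq (congrArg label h.1.symm)

lemma jointColour_insert_bond (hu : u = e.1 ∨ u = bondEnd e)
    (hz : ¬ Conn (finsetCfg (insert (Sum.inl e) S)) z u) :
    jointColour (ofFinset (insert (Sum.inl e) S)) z = jointColour (ofFinset S) z := by
  have hrep : clusterRep (finsetCfg S) z = clusterRep (finsetCfg (insert (Sum.inl e) S)) z := by
    refine clusterRep_eq_of_forall_conn (finsetCfg_mono (Finset.subset_insert _ _))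
      fun a b ha hab => ?_
    obtain ⟨hadj, hbond⟩ := finsetCfg_eq_true_iff.1 hab
    refine finsetCfg_eq_true_iff.2 ⟨hadj, (Finset.mem_insert.1 hbond).resolve_left fun he => hz ?_⟩
    obtain rfl : bondOf a b = e := Sum.inl_injective he
    have huab : u = a ∨ u = b := by
      rcases hadj.eq_bondEnd_or with h | h
      · exact hu.imp (·.trans h.1.symm) (·.trans h.2.symm)
      · exact hu.symm.imp (·.trans h.2.symm) (·.trans h.1.symm)
    rcases huab with rfl | rfl
    exacts [ha, ha.tail hab]
  rw [jointColour_ofFinset, jointColour_ofFinset, hrep, decide_eq_decide, Finset.mem_insert,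
    or_iff_right Sum.inr_ne_inl]

lemma exists_bond_forall_jointColour_eq (hU : U.Nonempty) (hV : ∀ v, Sum.inr v ∉ U)
    (O : Finset (Bond ⊕ V)) : ∃ e, Sum.inl e ∈ U ∧ ∃ c, ∀ η ⊆ U.erase (Sum.inl e), ∀ z,
      jointColour (ofFinset (insert (Sum.inl e) O ∪ η)) z = c ∨
      jointColour (ofFinset (insert (Sum.inl e) O ∪ η)) z = jointColour (ofFinset (O ∪ η)) z := by
  obtain ⟨e, he, u, hu, hrep⟩ := exists_bond_forall_clusterRep_eq hU hV O
  refine ⟨e, he, jointColour (ofFinset O) u, fun η hη z => ?_⟩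
  rw [Finset.insert_union]
  set S := insert (Sum.inl e) (O ∪ η)
  by_cases hz : Conn (finsetCfg S) z u
  · left
    have hOS : O ⊆ S := Finset.subset_union_left.trans (Finset.subset_insert _ _)
    have hSU : S ⊆ O ∪ U := Finset.insert_subset (Finset.mem_union_right _ he)
      (Finset.union_subset_union_right (hη.trans (Finset.erase_subset _ _)))
    rw [jointColour_ofFinset, jointColour_ofFinset,
      (clusterRep_eq_iff (finsetCfg_symm S)).2 hz, hrep S hOS hSU, decide_eq_decide]
    exact ⟨fun h => (Finset.mem_union.1 (hSU h)).resolve_right (hV _), fun h => hOS h⟩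
  · exact .inr (jointColour_insert_bond hu hz)

lemma jointColour_le_insert_vertex (O : Finset (Bond ⊕ V)) (v : V) :
    jointColour (ofFinset O) ≤ jointColour (ofFinset (insert (Sum.inr v) O)) := by
  have hcfg : finsetCfg (insert (Sum.inr v) O) = finsetCfg O := by
    funext a b
    rw [Bool.eq_iff_iff, finsetCfg_eq_true_iff, finsetCfg_eq_true_iff, Finset.mem_insert,
      or_iff_right Sum.inl_ne_inr]
  intro z hz
  rw [jointColour_ofFinset, hcfg, decide_eq_true_iff]
  exact Finset.mem_insert_of_mem (of_decide_eq_true hz)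

theorem hasMonotoneExploration_jointColour :
    HasMonotoneExploration fun S => jointColour (ofFinset S) := by
  intro O U hU
  by_cases hV : ∃ v : V, Sum.inr v ∈ U
  · obtain ⟨v, hv⟩ := hV
    refine ⟨_, hv, .inl fun η _ => ?_⟩
    rw [Finset.insert_union]
    exact jointColour_le_insert_vertex _ v
  · obtain ⟨e, he, c, hc⟩ := exists_bond_forall_jointColour_eq hU (not_exists.1 hV) O
    refine ⟨_, he, ?_⟩
    cases c
    · refine .inr fun η hη z => (hc η hη z).elim (fun h => ?_) Eq.le
      exact h.trans_le (Bool.false_le _)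
    · refine .inl fun η hη z => (hc η hη z).elim (fun h => ?_) Eq.ge
      exact (Bool.le_true _).trans_eq h.symm

lemma eventually_ofFinset_successes_eq {ι : Type*} [DecidableEq ι] (b : ι → Bool) (i : ι) :
    ∀ᶠ U in atTop, ofFinset (successes U b) i = b i := by
  filter_upwards [eventually_ge_atTop {i}] with U hU
  rw [Bool.eq_iff_iff, ofFinset, decide_eq_true_iff, mem_successes,
    and_iff_right (Finset.singleton_subset_iff.1 hU)]

lemma eventually_jointColour_eq (b : Bond ⊕ V → Bool) (v : V) :
    ∀ᶠ U in atTop, jointColour (ofFinset (successes U b)) v = jointColour b v := by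
  have hle : ∀ U, finsetCfg (successes U b) ≤ bondCfg (b ∘ Sum.inl) := fun U =>
    bondCfg_mono fun e he => (mem_successes.1 (of_decide_eq_true he)).2
  have hconn : ∀ w, Conn (bondCfg (b ∘ Sum.inl)) v w →
      ∀ᶠ U in atTop, Conn (finsetCfg (successes U b)) v w := by
    intro w hw
    induction hw with
    | refl => exact .of_forall fun _ => .refl
    | @tail a c _ hac ih =>
      obtain ⟨hadj, hbond⟩ := bondCfg_eq_true_iff.1 hac
      filter_upwards [ih, eventually_ofFinset_successes_eq b (Sum.inl (bondOf a c))] with U hU hb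
      exact hU.tail (bondCfg_eq_true_iff.2 ⟨hadj, hb.trans hbond⟩)
  filter_upwards [hconn _ (conn_clusterRep _ v), eventually_ofFinset_successes_eq b
    (Sum.inr (clusterRep (bondCfg (b ∘ Sum.inl)) v))] with U hU hcol
  exact (congrArg (fun w => ofFinset (successes U b) (Sum.inr w))
    (clusterRep_eq_of_le (hle U) hU)).trans hcol

lemma measurable_jointColour : Measurable jointColour := by
  refine measurable_pi_iff.2 fun v => measurable_of_tendsto_metrizable' atTop
    (fun U => measurable_successes U fun S => jointColour (ofFinset S) v)
    (tendsto_pi_nhds.2 fun b => tendsto_nhds_of_eventually_eq (eventually_jointColour_eq b v))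

end Exploration

/-! ### The laws of the open bonds and of the black vertices -/

section Invariance

open unitInterval

variable {a b c d : V} (φ : SqAdj ≃r SqAdj) (ω : Bond → Bool)

lemma SqAdj.eq_or_eq_of_bondOf_eq (h : SqAdj a b) (h' : SqAdj c d) (he : bondOf a b = bondOf c d) :
    a = c ∧ b = d ∨ a = d ∧ b = c := by
  have h₁ := h.eq_bondEnd_or
  have h₂ := h'.eq_bondEnd_or
  rw [he] at h₁
  grind

/-- The action of an automorphism of the square lattice on bonds. -/
def bondMap (e : Bond) : Bond := bondOf (φ e.1) (φ (bondEnd e))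

variable {φ}

lemma bondMap_bondOf (h : SqAdj a b) : bondMap φ (bondOf a b) = bondOf (φ a) (φ b) := by
  rw [bondMap]
  rcases h.eq_bondEnd_or with ⟨ha, hb⟩ | ⟨hb, ha⟩
  · rw [← ha, ← hb]
  · rw [← ha, ← hb, bondOf_comm]

variable (φ)

lemma bondMap_injective : Function.Injective (bondMap φ) := by
  intro e e' h
  rw [← bondOf_bondEnd e, ← bondOf_bondEnd e']
  rcases (φ.map_rel_iff.2 (sqAdj_bondEnd e)).eq_or_eq_of_bondOf_eq
    (φ.map_rel_iff.2 (sqAdj_bondEnd e')) h with ⟨h₁, h₂⟩ | ⟨h₁, h₂⟩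
  · rw [φ.injective h₁, φ.injective h₂]
  · rw [φ.injective h₁, φ.injective h₂, bondOf_comm]

lemma preimage_openBonds : φ ⁻¹'o openBonds ω = openBonds (ω ∘ bondMap φ) := by
  funext a b
  refine propext ((and_congr_left' φ.map_rel_iff).trans (and_congr_right fun h => ?_))
  rw [Function.comp_apply, bondMap_bondOf h]

lemma reflTransGen_preimage_iff (R : LatticeRel) :
    Relation.ReflTransGen (φ ⁻¹'o R) a b ↔ Relation.ReflTransGen R (φ a) (φ b) := by
  refine ⟨fun h => .lift φ (fun _ _ => id) _ _ h, fun h => ?_⟩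
  have hlift := Relation.ReflTransGen.lift (p := φ ⁻¹'o R) φ.symm
    (fun x y hxy => by simpa [Function.onFun, Order.Preimage] using hxy) _ _ h
  simpa [Function.onFun] using hlift

lemma clusterRep_bondMap_eq_iff :
    clusterRep (bondCfg (ω ∘ bondMap φ)) a = clusterRep (bondCfg (ω ∘ bondMap φ)) b ↔
      clusterRep (bondCfg ω) (φ a) = clusterRep (bondCfg ω) (φ b) := by
  rw [clusterRep_eq_iff (bondCfg_symm _), clusterRep_eq_iff (bondCfg_symm _), conn_bondCfg_iff,
    conn_bondCfg_iff, ← preimage_openBonds, reflTransGen_preimage_iff]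

lemma preimage_blackRel (ξ : ColourCfg) : φ ⁻¹'o blackRel ξ = blackRel (ξ ∘ φ) := by
  funext a b
  exact propext (and_congr_left' φ.map_rel_iff)

end Invariance

section Laws

open unitInterval Filter

lemma measurable_apply_eq {ι : Type*} (i : ι) (c : Bool) :
    Measurable fun x : ι → Bool => x i = c :=
  (measurable_of_finite (· = c)).comp (measurable_pi_apply i)

lemma measurable_openBonds : Measurable openBonds :=
  measurable_pi_iff.2 fun a => measurable_pi_iff.2 fun b =>
    measurable_const.and (measurable_apply_eq (bondOf a b) true)

lemma measurable_within_colour (adj : LatticeRel) (c : Bool) :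
    Measurable fun ξ : ColourCfg => within adj {v | ξ v = c} :=
  measurable_pi_iff.2 fun a => measurable_pi_iff.2 fun b =>
    measurable_const.and ((measurable_apply_eq a c).and (measurable_apply_eq b c))

lemma measurable_blackRel : Measurable blackRel := measurable_within_colour SqAdj true

theorem isPercolationLaw_openBonds (q : I) :
    IsPercolationLaw ((bernoulliProduct fun _ : Bond => q).map openBonds) := by
  refine isPercolationLaw_map _ measurable_openBonds isLatticeSubgraph_openBonds
    (hasMonotoneExploration_of_monotone fun S T h => openBonds_mono fun e he => ?_)
    (fun b u v => ?_) fun φ => ?_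
  · exact decide_eq_true (h (of_decide_eq_true he))
  · filter_upwards [eventually_ofFinset_successes_eq b (bondOf u v)] with U hU
    rw [openBonds, openBonds, hU]
  · have hφ := bernoulliProduct_map_comp (fun _ : Bond => q) (bondMap_injective φ)
    have hcomp : (fun R => φ ⁻¹'o R) ∘ openBonds = openBonds ∘ fun ω => ω ∘ bondMap φ :=
      funext (preimage_openBonds φ)
    rw [Measure.map_map (measurable_preimage_rel φ) measurable_openBonds, hcomp,
      ← Measure.map_map measurable_openBonds (measurable_comp_index _), hφ]
    rfl

lemma measurable_uncurry_clusterColour : Measurable (Function.uncurry clusterColour) :=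
  measurable_jointColour.comp measurable_sumElim

lemma map_uncurry_congr {α β γ : Type*} [MeasurableSpace α] [MeasurableSpace β] [MeasurableSpace γ]
    {μ : Measure α} {ν : Measure β} [SFinite ν] {f g : α → β → γ}
    (hf : Measurable (Function.uncurry f)) (hg : Measurable (Function.uncurry g))
    (h : ∀ a, ν.map (f a) = ν.map (g a)) :
    (μ.prod ν).map (Function.uncurry f) = (μ.prod ν).map (Function.uncurry g) := by
  ext s hs
  rw [Measure.map_apply hf hs, Measure.map_apply hg hs, Measure.prod_apply (hf hs),
    Measure.prod_apply (hg hs)]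
  refine lintegral_congr fun a => ?_
  have hfa : Measurable (f a) := hf.comp measurable_prodMk_left
  have hga : Measurable (g a) := hg.comp measurable_prodMk_left
  exact (Measure.map_apply hfa hs).symm.trans ((congrArg (· s) (h a)).trans
    (Measure.map_apply hga hs))

lemma map_jointColour (q r : I) :
    (bernoulliProduct (Sum.elim (fun _ : Bond => q) fun _ : V => r)).map jointColour =
      ((bernoulliProduct fun _ : Bond => q).prod (bernoulliProduct fun _ : V => r)).map
        (Function.uncurry clusterColour) := by
  rw [← bernoulliProduct_prod_map_sumElim, Measure.map_map measurable_jointColour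
    measurable_sumElim]
  rfl

lemma map_jointColour_comp (q r : I) (φ : SqAdj ≃r SqAdj) :
    ((bernoulliProduct (Sum.elim (fun _ : Bond => q) fun _ : V => r)).map jointColour).map
        (fun ξ => ξ ∘ φ) =
      (bernoulliProduct (Sum.elim (fun _ : Bond => q) fun _ : V => r)).map jointColour := by
  rw [map_jointColour]
  set μ := bernoulliProduct fun _ : Bond => q
  set ν := bernoulliProduct fun _ : V => r
  have hbond : MeasurePreserving (Prod.map (fun ω => ω ∘ bondMap φ) id) (μ.prod ν) (μ.prod ν) :=
    MeasurePreserving.prod ⟨measurable_comp_index _, bernoulliProduct_map_comp _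
      (bondMap_injective φ)⟩ (.id ν)
  calc ((μ.prod ν).map (Function.uncurry clusterColour)).map (fun ξ => ξ ∘ φ)
      = (μ.prod ν).map (Function.uncurry fun ω y => clusterColour ω y ∘ φ) :=
        Measure.map_map (measurable_comp_index φ) measurable_uncurry_clusterColour
    _ = (μ.prod ν).map (Function.uncurry fun ω => clusterColour (ω ∘ bondMap φ)) :=
        map_uncurry_congr ((measurable_comp_index φ).comp measurable_uncurry_clusterColour)
          (measurable_uncurry_clusterColour.comp hbond.measurable) fun ω =>
            bernoulliProduct_map_comp_eq_of_ker_eq r (fun v => clusterRep (bondCfg ω) (φ v))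
              (clusterRep (bondCfg (ω ∘ bondMap φ))) fun _ _ =>
                (clusterRep_bondMap_eq_iff φ ω).symm
    _ = ((μ.prod ν).map (Prod.map (fun ω => ω ∘ bondMap φ) id)).map
          (Function.uncurry clusterColour) :=
        (Measure.map_map measurable_uncurry_clusterColour hbond.measurable).symm
    _ = (μ.prod ν).map (Function.uncurry clusterColour) := by rw [hbond.map_eq]

theorem isPercolationLaw_blackRel (q r : I) :
    IsPercolationLaw ((bernoulliProduct (Sum.elim (fun _ : Bond => q) fun _ : V => r)).map
      fun b => blackRel (jointColour b)) := by
  have hblack := measurable_blackRel.comp measurable_jointColour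
  refine isPercolationLaw_map _ hblack (fun b => isLatticeSubgraph_blackRel _)
    (hasMonotoneExploration_jointColour.comp_monotone blackRel_mono) (fun b u v => ?_) fun φ => ?_
  · filter_upwards [eventually_jointColour_eq b u, eventually_jointColour_eq b v] with U hu hv
    simp only [blackRel, within, Set.mem_ofPred_eq, hu, hv]
  · have hcomp : (fun R => φ ⁻¹'o R) ∘ blackRel = blackRel ∘ fun ξ => ξ ∘ φ :=
      funext (preimage_blackRel φ)
    change Measure.map _ (Measure.map (blackRel ∘ jointColour) _) =
      Measure.map (blackRel ∘ jointColour) _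
    rw [← Measure.map_map measurable_blackRel measurable_jointColour,
      Measure.map_map (measurable_preimage_rel φ) measurable_blackRel, hcomp,
      ← Measure.map_map measurable_blackRel (measurable_comp_index φ), map_jointColour_comp]

end Laws

/-! ### Infinite clusters -/

section InfiniteClusters

open Filter

/-- Infinitely many vertices can be reached from `u` by steps of `R`. -/
def HasInfiniteCluster (R : LatticeRel) (u : V) : Prop := {w | Relation.ReflTransGen R u w}.Infinite

/-- Some vertex has an infinite cluster. -/
def Percolates (R : LatticeRel) : Prop := ∃ u, HasInfiniteCluster R u

variable {R R' : LatticeRel} {u : V}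

lemma measurable_reflTransGen (u v : V) :
    Measurable fun R : LatticeRel => Relation.ReflTransGen R u v := by
  have huniv : ∀ R : LatticeRel, within R Set.univ = R := fun R => by
    funext a b
    simp only [within, Set.mem_univ, and_true]
  simpa only [ConnIn, huniv] using
    measurableSet_setOfPred.1 (isFinitelyIncreasing_connIn Set.univ u v).measurableSet

lemma measurable_hasInfiniteCluster (u : V) :
    Measurable fun R : LatticeRel => HasInfiniteCluster R u :=
  (measurableSet_setOfPred.1 MeasurableSet.setOfPred_infinite).comp
    (measurable_set_iff.2 fun w => measurable_reflTransGen u w)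

lemma measurable_percolates : Measurable Percolates :=
  .exists measurable_hasInfiniteCluster

lemma HasInfiniteCluster.mono (h : HasInfiniteCluster R u) (hle : ∀ a b, R a b → R' a b) :
    HasInfiniteCluster R' u :=
  Set.Infinite.mono (fun w hw => Relation.ReflTransGen.mono hle u w hw) h

lemma hasInfiniteCluster_preimage_iff (φ : SqAdj ≃r SqAdj) :
    HasInfiniteCluster (φ ⁻¹'o R) u ↔ HasInfiniteCluster R (φ u) := by
  have hset : {w | Relation.ReflTransGen (φ ⁻¹'o R) u w} =
      φ ⁻¹' {w | Relation.ReflTransGen R (φ u) w} :=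
    Set.ext fun _ => reflTransGen_preimage_iff φ R
  rw [HasInfiniteCluster, HasInfiniteCluster, hset,
    ← Set.infinite_image_iff φ.injective.injOn, Set.image_preimage_eq _ φ.surjective]

lemma finite_box (m : ℤ) (z : V) : (box m z).Finite :=
  (Set.finite_Icc (z - (m, m)) (z + (m, m))).subset fun v hv => by
    simp only [box, Set.mem_ofPred_eq] at hv
    exact ⟨⟨hv.1, hv.2.2.1⟩, ⟨hv.2.1, hv.2.2.2⟩⟩

lemma HasInfiniteCluster.mem_armEvent (h : HasInfiniteCluster R 0) (hR : IsLatticeSubgraph R)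
    (m : ℕ) : R ∈ armEvent m := by
  obtain ⟨v, hv, hvm⟩ := h.exists_notMem_finite (finite_box m 0)
  obtain ⟨w, x, hw, hwm, hwx, hxm⟩ := exists_connIn_exit hv (by simp [box]) hvm
  refine ⟨w, ⟨hwm, fun hwm' => hxm ?_⟩, hw⟩
  have hadj := sqAdj_iff.1 (hR w x hwx).1
  simp only [box, Set.mem_ofPred_eq, Prod.fst_zero, Prod.snd_zero] at hwm' ⊢
  omega

lemma finite_setOf_starAdj (a : V) : {w | StarAdj a w}.Finite :=
  (finite_box 1 a).subset fun w hw => by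
    have := starAdj_iff.1 hw
    simp only [box, Set.mem_ofPred_eq]
    omega

/-- Removing finitely many vertices splits an infinite cluster into finitely many clusters, one of
which is infinite. -/
lemma HasInfiniteCluster.percolates_of_finite_change (hu : HasInfiniteCluster R u)
    (hstar : ∀ a b, R a b → StarAdj a b) {D : Set V} (hD : D.Finite)
    (h : ∀ a b, R a b → a ∉ D → b ∉ D → R' a b) : Percolates R' := by
  by_contra hfin
  let N : Set V := insert u (⋃ a ∈ D, {w | StarAdj a w})
  have hN : N.Finite := (hD.biUnion fun a _ => finite_setOf_starAdj a).insert u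
  refine hu ((hD.union (hN.biUnion fun z _ =>
    Set.not_infinite.1 (not_exists.1 hfin z))).subset fun w hw => ?_)
  induction hw with
  | refl => exact .inr (Set.mem_biUnion (Set.mem_insert u _) Relation.ReflTransGen.refl)
  | @tail a c _ hac ih =>
    by_cases hc : c ∈ D
    · exact .inl hc
    by_cases ha : a ∈ D
    · exact .inr (Set.mem_biUnion (x := c) (.inr (Set.mem_biUnion ha (hstar a c hac)))
        Relation.ReflTransGen.refl)
    obtain ⟨z, hz, hza⟩ := Set.mem_iUnion₂.1 (ih.resolve_left ha)
    exact .inr (Set.mem_biUnion hz (Relation.ReflTransGen.tail hza (h a c hac ha hc)))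

/-- The origin is surrounded by circuits at arbitrarily large scales. -/
def HasCircuitsAtAllScales (R : LatticeRel) : Prop :=
  ∀ n : ℕ, ∃ N M : ℤ, n ≤ N ∧ N < M ∧ R ∈ circuitEvent N M

lemma measurable_hasCircuitsAtAllScales : Measurable HasCircuitsAtAllScales :=
  .forall fun _ => .exists fun N => .exists fun M => .and measurable_const <|
    .and measurable_const <|
      measurableSet_setOfPred.1 (isFinitelyIncreasing_circuitEvent N M).measurableSet

lemma frequently_ae_map_iff {Ω Ω' : Type*} [MeasurableSpace Ω] [MeasurableSpace Ω'] {P : Measure Ω}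
    {f : Ω → Ω'} (hf : Measurable f) {p : Ω' → Prop} (hp : Measurable p) :
    (∃ᵐ y ∂P.map f, p y) ↔ ∃ᵐ x ∂P, p (f x) :=
  not_congr (ae_map_iff hf.aemeasurable (measurableSet_setOfPred.2 hp.not))

namespace IsPercolationLaw

variable {μ : Measure LatticeRel}

lemma ae_not_percolates (H : IsPercolationLaw μ) (h : ∀ᵐ R ∂μ, ¬ HasInfiniteCluster R 0) :
    ∀ᵐ R ∂μ, ¬ Percolates R := by
  simp only [Percolates, not_exists]
  refine ae_all_iff.2 fun u => ?_
  rw [← H.map_preimage (translate u)] at h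
  filter_upwards [ae_of_ae_map (measurable_preimage_rel _).aemeasurable h] with R hR
  rwa [hasInfiniteCluster_preimage_iff, translate_apply, zero_add] at hR

theorem frequently_hasCircuitsAtAllScales (H : IsPercolationLaw μ)
    (h : ∃ᵐ R ∂μ, HasInfiniteCluster R 0) : ∃ᵐ R ∂μ, HasCircuitsAtAllScales R := by
  have := H.toIsProbabilityMeasure
  obtain ⟨c, hc, hcirc⟩ := H.exists_circuitEvents (θ := μ.real {R | HasInfiniteCluster R 0})
    (ENNReal.toReal_pos (frequently_ae_iff.1 h) (measure_ne_top μ _))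
    fun m => H.real_mono fun R hR hinf => HasInfiniteCluster.mem_armEvent hinf hR m
  let A : ℕ → Set LatticeRel := fun n => ⋃ N : ℤ, ⋃ M : ℤ, ⋃ _ : (n : ℤ) ≤ N ∧ N < M,
    circuitEvent N M
  have hAm : ∀ n, MeasurableSet (A n) := fun n => .iUnion fun N => .iUnion fun M =>
    .iUnion fun _ => (isFinitelyIncreasing_circuitEvent N M).measurableSet
  have hanti : Antitone A := fun m n hmn => Set.iUnion_mono fun N => Set.iUnion_mono fun M =>
    Set.iUnion_mono' fun hN => ⟨⟨(Int.ofNat_le.2 hmn).trans hN.1, hN.2⟩, subset_rfl⟩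
  have hAc : ∀ n, ENNReal.ofReal c ≤ μ (A n) := fun n => by
    obtain ⟨M, hM, hcM⟩ := hcirc n
    refine (ENNReal.ofReal_le_iff_le_toReal (measure_ne_top μ _)).2
      (hcM.trans (measureReal_mono ?_))
    exact fun R hR => Set.mem_iUnion₂.2 ⟨n, M, Set.mem_iUnion.2 ⟨⟨le_rfl, hM⟩, hR⟩⟩
  have hset : {R | HasCircuitsAtAllScales R} = ⋂ n, A n := by
    ext R
    simp only [A, HasCircuitsAtAllScales, Set.mem_ofPred_eq, Set.mem_iInter, Set.mem_iUnion,
      exists_prop, and_assoc]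
  rw [frequently_ae_iff, hset,
    hanti.measure_iInter (fun n => (hAm n).nullMeasurableSet) ⟨0, measure_ne_top μ _⟩]
  exact ((ENNReal.ofReal_pos.2 hc).trans_le (le_iInf hAc)).ne'

end IsPercolationLaw

end InfiniteClusters

/-! ### Tail events and comparison of product measures -/

section ProductMeasures

open unitInterval ProbabilityTheory

variable {ι : Type*}

theorem bernoulliProduct_eq_zero_or_one (w : ι → I) {A : Set (ι → Bool)} (hA : MeasurableSet A)
    (hinv : ∀ x y, {i | x i ≠ y i}.Finite → x ∈ A → y ∈ A) :
    bernoulliProduct w A = 0 ∨ bernoulliProduct w A = 1 := by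
  classical
  let s : ι → MeasurableSpace (ι → Bool) := fun i => .comap (fun x => x i) inferInstance
  have hindep : iIndep s (bernoulliProduct w) :=
    iIndepFun_infinitePi (X := fun _ x => x) fun _ => measurable_id
  refine measure_zero_or_one_of_measurableSet_limsup (s := s) (f := Filter.cofinite)
    (p := Set.Finite) (ns := fun F : Finset ι => (F : Set ι))
    (fun i => (measurable_pi_apply i).comap_le) hindep (fun t ht => ht.compl_mem_cofinite)
    (fun F G => ⟨F ∪ G, by simp, by simp⟩)
    Finset.finite_toSet (fun i => ⟨{i}, by simp⟩) ?_
  rw [Filter.limsup_eq_iInf_iSup, MeasurableSpace.measurableSet_iInf]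
  refine fun t => MeasurableSpace.measurableSet_iInf.2 fun ht => ?_
  rw [Filter.mem_cofinite] at ht
  let restrictTo : (ι → Bool) → ι → Bool := fun x i => if i ∈ t then x i else false
  have hmeas : @Measurable _ _ (⨆ i ∈ t, s i) _ restrictTo := by
    refine (@measurable_pi_iff _ _ _ (⨆ i ∈ t, s i) _ _).2 fun i => ?_
    by_cases hi : i ∈ t
    · simp only [restrictTo, hi, if_true]
      exact (comap_measurable fun x : ι → Bool => x i).mono (le_iSup₂_of_le i hi le_rfl) le_rfl
    · simp only [restrictTo, hi, if_false]
      exact measurable_const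
  have hdiff : ∀ x, {i | x i ≠ restrictTo x i}.Finite := fun x =>
    ht.subset fun i hi hit => hi (if_pos hit).symm
  have hpre : A = restrictTo ⁻¹' A := Set.ext fun x =>
    ⟨hinv _ _ (hdiff x), hinv _ _ (by simpa only [ne_comm] using hdiff x)⟩
  rw [hpre]
  exact hmeas hA

lemma ae_bernoulliProduct_of_frequently {w : ι → I} {p : (ι → Bool) → Prop} (hp : Measurable p)
    (hinv : ∀ x y, {i | x i ≠ y i}.Finite → p x → p y) (h : ∃ᵐ x ∂bernoulliProduct w, p x) :
    ∀ᵐ x ∂bernoulliProduct w, p x :=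
  have hm : MeasurableSet {x | p x} := measurableSet_setOfPred.2 hp
  (mem_ae_iff_prob_eq_one hm).2
    ((bernoulliProduct_eq_zero_or_one w hm hinv).resolve_left (frequently_ae_iff.1 h))

lemma bernoulliProduct_map_not (w : ι → I) :
    (bernoulliProduct w).map (fun x i => !x i) = bernoulliProduct fun i => σ (w i) := by
  rw [bernoulliProduct, Measure.infinitePi_map_pi (f := fun _ => not) _ fun _ => .of_discrete]
  refine congrArg Measure.infinitePi (funext fun i => ?_)
  rw [map_bernoulliMeasure' _ _ .of_discrete]
  ext s
  simp [bernoulliMeasure_def, add_comm]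

lemma bernoulliMeasure_real_true (q : I) : (bernoulliMeasure true false q).real {true} = q :=
  bernoulliMeasure_real_apply_of_mem_of_notMem q .of_discrete (by simp) (by simp)

lemma eq_bernoulliMeasure_of_real_true (ν : Measure Bool) [IsProbabilityMeasure ν] {q : I}
    (h : ν.real {true} = q) : ν = bernoulliMeasure true false q := by
  have htrue : ν.real {true} = (bernoulliMeasure true false q).real {true} := by
    rw [h, bernoulliMeasure_real_true]
  refine Measure.ext_of_measureReal_singleton fun b => ?_
  cases b with
  | true => exact htrue
  | false =>
    have hcompl : ({false} : Set Bool) = {true}ᶜ := by ext b; cases b <;> simp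
    rw [hcompl, probReal_compl_eq_one_sub .of_discrete, probReal_compl_eq_one_sub .of_discrete,
      htrue]

lemma map_and_bernoulliMeasure_prod (q t : I) :
    ((bernoulliMeasure true false q).prod (bernoulliMeasure true false t)).map
      (fun b : Bool × Bool => b.1 && b.2) = bernoulliMeasure true false (q * t) := by
  have hpre : (fun b : Bool × Bool => b.1 && b.2) ⁻¹' {true} = {true} ×ˢ {true} := by
    ext b
    simp only [Set.mem_preimage, Set.mem_singleton_iff, Bool.and_eq_true, Set.mem_prod]
  have := Measure.isProbabilityMeasure_map (μ := (bernoulliMeasure true false q).prod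
    (bernoulliMeasure true false t)) (f := fun b : Bool × Bool => b.1 && b.2) .of_discrete
  apply eq_bernoulliMeasure_of_real_true
  rw [map_measureReal_apply .of_discrete .of_discrete, hpre, measureReal_prod_prod,
    bernoulliMeasure_real_true, bernoulliMeasure_real_true]
  rfl

lemma bernoulliProduct_mul_le (w t : ι → I) {A : Set (ι → Bool)} (hA : IsUpperSet A)
    (hAm : MeasurableSet A) : bernoulliProduct (w * t) A ≤ bernoulliProduct w A := by
  let κ : Measure (ι → Bool × Bool) := .infinitePi fun i =>
    (bernoulliMeasure true false (w i)).prod (bernoulliMeasure true false (t i))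
  have hmap : ∀ f : Bool × Bool → Bool, κ.map (fun x i => f (x i)) = .infinitePi fun i =>
      ((bernoulliMeasure true false (w i)).prod (bernoulliMeasure true false (t i))).map f :=
    fun f => Measure.infinitePi_map_pi (f := fun _ => f) _ fun _ => .of_discrete
  have hmeas : ∀ f : Bool × Bool → Bool, Measurable fun (x : ι → Bool × Bool) i => f (x i) :=
    fun f => measurable_pi_iff.2 fun i => (measurable_of_finite f).comp (measurable_pi_apply i)
  have hfst : κ.map (fun x i => (x i).1) = bernoulliProduct w := by
    simp only [hmap, Measure.map_fst_prod, measure_univ, one_smul, bernoulliProduct]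
  have hand : κ.map (fun x i => (x i).1 && (x i).2) = bernoulliProduct (w * t) := by
    rw [hmap fun b => b.1 && b.2]
    simp only [map_and_bernoulliMeasure_prod, bernoulliProduct, Pi.mul_apply]
  rw [← hfst, ← hand, Measure.map_apply (hmeas Prod.fst) hAm,
    Measure.map_apply (hmeas fun b => b.1 && b.2) hAm]
  exact measure_mono fun x hx => hA (fun i hi => Bool.and_elim_left hi) hx

lemma bernoulliProduct_mono {w w' : ι → I} (hw : w ≤ w') {A : Set (ι → Bool)} (hA : IsUpperSet A)
    (hAm : MeasurableSet A) : bernoulliProduct w A ≤ bernoulliProduct w' A := by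
  let t : ι → I := fun i => ⟨w i / w' i, div_nonneg (w i).2.1 (w' i).2.1,
    div_le_one_of_le₀ (hw i) (w' i).2.1⟩
  have hwt : w = w' * t := funext fun i => Subtype.ext
    (mul_div_cancel_of_imp' fun h => le_antisymm (h ▸ hw i) (w i).2.1).symm
  exact hwt ▸ bernoulliProduct_mul_le w' t hA hAm

lemma ae_bernoulliProduct_mono {w w' : ι → I} (hw : w ≤ w') {p : (ι → Bool) → Prop}
    (hp : Measurable p) (hmono : Monotone p) (h : ∀ᵐ x ∂bernoulliProduct w, p x) :
    ∀ᵐ x ∂bernoulliProduct w', p x := by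
  have hm : MeasurableSet {x | p x} := measurableSet_setOfPred.2 hp
  refine (mem_ae_iff_prob_eq_one hm).2 (le_antisymm prob_le_one ?_)
  rw [← (mem_ae_iff_prob_eq_one hm).1 h]
  exact bernoulliProduct_mono hw (fun _ _ hxy => hmono hxy) hm

end ProductMeasures

/-! ### Finiteness of bond clusters -/

section BondClusters

open unitInterval

variable {ω ω' : Bond → Bool}

/-- The configuration of the dual lattice in which a bond is open if the bond it crosses is closed
in `ω`. -/
def dualCfg (ω : Bond → Bool) : Bond → Bool := fun e => !ω (dualBond e)

lemma dualBond_injective : Function.Injective dualBond := by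
  rintro ⟨⟨x, y⟩, vertical⟩ ⟨⟨x', y'⟩, vertical'⟩ h
  cases vertical <;> cases vertical' <;> simp [dualBond] at h ⊢ <;> omega

lemma measurable_dualCfg : Measurable dualCfg :=
  measurable_pi_iff.2 fun _ => (measurable_of_finite not).comp (measurable_pi_apply _)

lemma bernoulliProduct_map_dualCfg (q : I) :
    (bernoulliProduct fun _ : Bond => q).map dualCfg = bernoulliProduct fun _ => σ q := by
  have hnot : Measurable fun (x : Bond → Bool) e => !x e :=
    measurable_pi_iff.2 fun e => (measurable_of_finite not).comp (measurable_pi_apply e)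
  have hcomp : dualCfg = (fun x e => !x e) ∘ fun ω => ω ∘ dualBond := rfl
  rw [hcomp, ← Measure.map_map hnot (measurable_comp_index _),
    bernoulliProduct_map_comp _ dualBond_injective, bernoulliProduct_map_not]
  rfl

lemma finite_dualBox (m : ℤ) : (dualBox m).Finite :=
  (finite_box m 0).subset fun v hv => by
    simp only [box, dualBox, Set.mem_ofPred_eq, Prod.fst_zero, Prod.snd_zero] at hv ⊢
    omega

lemma percolates_openBonds_congr (h : {e | ω e ≠ ω' e}.Finite) (hω : Percolates (openBonds ω)) :
    Percolates (openBonds ω') := by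
  obtain ⟨u, hu⟩ := hω
  refine hu.percolates_of_finite_change (fun a b hab => hab.1.starAdj) (h.image Prod.fst)
    fun a b hab ha hb => ⟨hab.1, ?_⟩
  by_contra hclosed
  have hne : ω (bondOf a b) ≠ ω' (bondOf a b) := fun heq => hclosed (heq ▸ hab.2)
  rcases hab.1.eq_bondEnd_or with ⟨ha', -⟩ | ⟨hb', -⟩
  · exact ha ⟨_, hne, ha'.symm⟩
  · exact hb ⟨_, hne, hb'.symm⟩

lemma HasCircuitsAtAllScales.not_percolates_dualCfg (h : HasCircuitsAtAllScales (openBonds ω)) :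
    ¬ Percolates (openBonds (dualCfg ω)) := by
  rintro ⟨u, hu⟩
  obtain ⟨N, M, hN, hNM, hcirc⟩ := h (u.1.natAbs + u.2.natAbs + 1)
  have huN : u ∈ dualBox N := by
    simp only [dualBox, Set.mem_ofPred_eq]
    omega
  obtain ⟨v, hv, hvM⟩ := hu.exists_notMem_finite (finite_dualBox M)
  obtain ⟨a, b, c, d, hab, hcd, heq⟩ := exists_bondOf_eq_dualBond_of_mem_circuitEvent
    (isLatticeSubgraph_openBonds ω) hNM.le hcirc (fun _ _ h => h.1) huN hvM hv
  have hclosed := hcd.2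
  rw [dualCfg, ← heq, hab.2] at hclosed
  cases hclosed

lemma measurable_percolates_openBonds : Measurable fun ω => Percolates (openBonds ω) :=
  measurable_percolates.comp measurable_openBonds

/-- Otherwise the closed dual bonds, which are at least as dense, percolate almost surely, and they
cannot cross the circuits of open bonds. -/
theorem ae_not_percolates_openBonds {q : I} (hq : (q : ℝ) ≤ 1 / 2) :
    ∀ᵐ ω ∂bernoulliProduct fun _ : Bond => q, ¬ Percolates (openBonds ω) := by
  refine ae_of_ae_map measurable_openBonds.aemeasurable
    ((isPercolationLaw_openBonds q).ae_not_percolates ?_)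
  by_contra hinf
  have hcirc : ∃ᵐ ω ∂bernoulliProduct fun _ : Bond => q, HasCircuitsAtAllScales (openBonds ω) :=
    (frequently_ae_map_iff measurable_openBonds measurable_hasCircuitsAtAllScales).1
      ((isPercolationLaw_openBonds q).frequently_hasCircuitsAtAllScales hinf)
  have hperc : ∀ᵐ ω ∂bernoulliProduct fun _ : Bond => q, Percolates (openBonds ω) :=
    ae_bernoulliProduct_of_frequently measurable_percolates_openBonds
      (fun _ _ => percolates_openBonds_congr)
      (((frequently_ae_map_iff measurable_openBonds (measurable_hasInfiniteCluster 0)).1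
        hinf).mono fun _ h => ⟨0, h⟩)
  have hdual : ∀ᵐ ω ∂bernoulliProduct fun _ : Bond => q, Percolates (openBonds (dualCfg ω)) := by
    refine ae_of_ae_map (p := fun ω => Percolates (openBonds ω)) measurable_dualCfg.aemeasurable ?_
    rw [bernoulliProduct_map_dualCfg]
    have hle : q ≤ σ q := Subtype.coe_le_coe.1 (by rw [coe_symm_eq]; linarith)
    exact ae_bernoulliProduct_mono (fun _ => hle) measurable_percolates_openBonds
      (fun _ _ hω ⟨u, hu⟩ => ⟨u, hu.mono (openBonds_mono hω)⟩) hperc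
  obtain ⟨ω, hcircω, hdualω⟩ := (hcirc.and_eventually hdual).exists
  exact hcircω.not_percolates_dualCfg hdualω

end BondClusters

/-! ### Black and white percolation exclude each other -/

section Coexistence

open unitInterval

variable {b b' : Bond ⊕ V → Bool} {ξ : ColourCfg}

/-- The white `*`-adjacent pairs of a colour configuration. -/
def whiteRel (ξ : ColourCfg) : LatticeRel := within StarAdj {v | ξ v = false}

lemma measurable_whiteRel : Measurable whiteRel := measurable_within_colour StarAdj false

lemma Conn.of_forall_notMem {η η' : EdgeCfg} {K : Set V} {v w : V}
    (hη : ∀ x y, x ∉ K → η x y → η' x y) (hK : ∀ x ∈ K, ¬ Conn η v x) (h : Conn η v w) :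
    Conn η' v w := by
  induction h with
  | refl => exact .refl
  | tail hvx hxy ih => exact ih.tail (hη _ _ (fun hx => hK _ hx hvx) hxy)

lemma clusterRep_bondCfg_eq_of_forall_notMem {ω ω' : Bond → Bool} {K : Set V} {v : V}
    (hK : ∀ e, ω e ≠ ω' e → e.1 ∈ K ∧ bondEnd e ∈ K) (hω : ∀ a ∈ K, ¬ Conn (bondCfg ω) v a)
    (hω' : ∀ a ∈ K, ¬ Conn (bondCfg ω') v a) :
    clusterRep (bondCfg ω) v = clusterRep (bondCfg ω') v := by
  have hcfg : ∀ x y, x ∉ K → bondCfg ω x y = bondCfg ω' x y := by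
    intro x y hx
    rw [Bool.eq_iff_iff, bondCfg_eq_true_iff, bondCfg_eq_true_iff]
    refine and_congr_right fun hxy => ?_
    by_contra hne
    have hmem := hK (bondOf x y) fun heq => hne (by rw [heq])
    rcases hxy.eq_bondEnd_or with ⟨hfst, -⟩ | ⟨-, hend⟩
    · exact hx (hfst ▸ hmem.1)
    · exact hx (hend ▸ hmem.2)
  exact clusterRep_congr fun w =>
    ⟨.of_forall_notMem (fun x y hx hxy => hcfg x y hx ▸ hxy) hω,
      .of_forall_notMem (fun x y hx hxy => (hcfg x y hx).symm ▸ hxy) hω'⟩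

lemma finite_pCluster_bondCfg {ω : Bond → Bool} (h : ¬ Percolates (openBonds ω)) (v : V) :
    (pCluster (bondCfg ω) v).Finite := by
  have hfin := Set.not_infinite.1 (not_exists.1 h v)
  simpa only [pCluster, conn_bondCfg_iff] using hfin

/-- Only the colours of clusters that contain a modified vertex or an endpoint of a modified bond
can change. -/
lemma finite_setOf_jointColour_ne (h : {i | b i ≠ b' i}.Finite)
    (hb : ¬ Percolates (openBonds (b ∘ Sum.inl)))
    (hb' : ¬ Percolates (openBonds (b' ∘ Sum.inl))) :
    {v | jointColour b v ≠ jointColour b' v}.Finite := by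
  let F : Set Bond := {e | b (.inl e) ≠ b' (.inl e)}
  let K : Set V := Prod.fst '' F ∪ bondEnd '' F ∪ {v | b (.inr v) ≠ b' (.inr v)}
  have hF : F.Finite := h.preimage Sum.inl_injective.injOn
  have hK : K.Finite :=
    ((hF.image _).union (hF.image _)).union (h.preimage Sum.inr_injective.injOn)
  refine (hK.biUnion fun a _ => (finite_pCluster_bondCfg hb a).union
    (finite_pCluster_bondCfg hb' a)).subset fun v hv => ?_
  by_contra hvK
  have hω : ∀ a ∈ K, ¬ Conn (bondCfg (b ∘ Sum.inl)) v a := fun a ha hva =>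
    hvK (Set.mem_biUnion ha (.inl (hva.symm (bondCfg_symm _))))
  have hω' : ∀ a ∈ K, ¬ Conn (bondCfg (b' ∘ Sum.inl)) v a := fun a ha hva =>
    hvK (Set.mem_biUnion ha (.inr (hva.symm (bondCfg_symm _))))
  have hrep : clusterRep (bondCfg (b ∘ Sum.inl)) v = clusterRep (bondCfg (b' ∘ Sum.inl)) v :=
    clusterRep_bondCfg_eq_of_forall_notMem (K := K)
      (fun e he => ⟨.inl (.inl ⟨e, he, rfl⟩), .inl (.inr ⟨e, he, rfl⟩)⟩) hω hω'
  refine hω _ (.inr fun heq => hv ?_) (conn_clusterRep _ v)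
  simp only [jointColour, clusterColour, ← hrep]
  exact heq

lemma percolates_whiteRel_congr (h : {i | b i ≠ b' i}.Finite)
    (hb : ¬ Percolates (openBonds (b ∘ Sum.inl)))
    (hb' : ¬ Percolates (openBonds (b' ∘ Sum.inl))) (hw : Percolates (whiteRel (jointColour b))) :
    Percolates (whiteRel (jointColour b')) := by
  obtain ⟨u, hu⟩ := hw
  refine hu.percolates_of_finite_change (fun _ _ hxy => hxy.1)
    (finite_setOf_jointColour_ne h hb hb') fun x y hxy hx hy => ⟨hxy.1, ?_, ?_⟩
  · exact (not_not.1 hx).symm.trans hxy.2.1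
  · exact (not_not.1 hy).symm.trans hxy.2.2

lemma HasCircuitsAtAllScales.not_percolates_whiteRel (h : HasCircuitsAtAllScales (blackRel ξ)) :
    ¬ Percolates (whiteRel ξ) := by
  rintro ⟨u, hu⟩
  obtain ⟨N, M, hN, hNM, hcirc⟩ := h (u.1.natAbs + u.2.natAbs)
  have huN : u ∈ box N 0 := by
    simp only [box, Set.mem_ofPred_eq, Prod.fst_zero, Prod.snd_zero]
    omega
  obtain ⟨v, huv, hvM⟩ := hu.exists_notMem_finite (finite_box M 0)
  obtain ⟨w, a, huw, hwa⟩ := exists_rel_of_mem_circuitEvent (isLatticeSubgraph_blackRel ξ) hNM hcirc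
    (fun _ _ h => h.1) huN hvM huv
  have hwhite : ξ w = false := by
    rcases huw.cases_tail with rfl | ⟨_, -, hstep⟩
    · rcases huv.cases_head with rfl | ⟨_, hstep, -⟩
      · simp only [box, Set.mem_ofPred_eq, Prod.fst_zero, Prod.snd_zero] at huN hvM
        omega
      · exact hstep.2.1
    · exact hstep.2.2
  exact Bool.false_ne_true (hwhite.symm.trans hwa.2.1)

theorem ae_not_percolates_whiteRel {q r : I} (hq : (q : ℝ) ≤ 1 / 2)
    (hblack : ∃ᵐ b ∂bernoulliProduct (Sum.elim (fun _ : Bond => q) fun _ : V => r),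
      HasInfiniteCluster (blackRel (jointColour b)) 0) :
    ∀ᵐ b ∂bernoulliProduct (Sum.elim (fun _ : Bond => q) fun _ : V => r),
      ¬ Percolates (whiteRel (jointColour b)) := by
  have hmeas : Measurable fun b => blackRel (jointColour b) :=
    measurable_blackRel.comp measurable_jointColour
  have hcirc : ∃ᵐ b ∂bernoulliProduct (Sum.elim (fun _ : Bond => q) fun _ : V => r),
      HasCircuitsAtAllScales (blackRel (jointColour b)) :=
    (frequently_ae_map_iff hmeas measurable_hasCircuitsAtAllScales).1
      ((isPercolationLaw_blackRel q r).frequently_hasCircuitsAtAllScales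
        ((frequently_ae_map_iff hmeas (measurable_hasInfiniteCluster 0)).2 hblack))
  have hfin : ∀ᵐ b ∂bernoulliProduct (Sum.elim (fun _ : Bond => q) fun _ : V => r),
      ¬ Percolates (openBonds (b ∘ Sum.inl)) := by
    refine ae_of_ae_map (p := fun ω => ¬ Percolates (openBonds ω))
      (measurable_comp_index Sum.inl).aemeasurable ?_
    rw [bernoulliProduct_map_comp _ Sum.inl_injective]
    exact ae_not_percolates_openBonds hq
  by_contra hwhite
  have hperc : ∀ᵐ b ∂bernoulliProduct (Sum.elim (fun _ : Bond => q) fun _ : V => r),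
      ¬ Percolates (openBonds (b ∘ Sum.inl)) ∧ Percolates (whiteRel (jointColour b)) := by
    refine ae_bernoulliProduct_of_frequently ?_ (fun x y hxy hx => ?_)
      (hfin.and_frequently hwhite)
    · exact (measurable_percolates_openBonds.comp (measurable_comp_index Sum.inl)).not.and
        (measurable_percolates.comp (measurable_whiteRel.comp measurable_jointColour))
    · have hbonds : {e | (y ∘ Sum.inl) e ≠ (x ∘ Sum.inl) e}.Finite :=
        (hxy.preimage Sum.inl_injective.injOn).subset fun e he => Ne.symm he
      have hy : ¬ Percolates (openBonds (y ∘ Sum.inl)) :=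
        mt (percolates_openBonds_congr hbonds) hx.1
      exact ⟨hy, percolates_whiteRel_congr hxy hx.1 hy hx.2⟩
  obtain ⟨b, hcircb, hpercb⟩ := (hcirc.and_eventually hperc).exists
  exact hcircb.not_percolates_whiteRel hpercb.2

end Coexistence

/-! ### The sample space -/

section Sample

open unitInterval ProbabilityTheory

lemma bit_eq_iff (n : ℕ) (x : ℝ) (b : Bool) :
    bit n x = b ↔ ⌊x * 2 ^ (n + 1)⌋ % 2 = if b then 1 else 0 := by
  cases b with
  | false =>
    rw [← Bool.not_eq_true, bit, boolOf_eq_true_iff]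
    simp
  | true =>
    rw [bit, boolOf_eq_true_iff]
    simp

lemma exists_forall_bit_eq_iff_floor_eq (s : ℕ → Bool) (n : ℕ) : ∃ m : ℤ, 0 ≤ m ∧ m + 1 ≤ 2 ^ n ∧
    ∀ x ∈ Set.Ico (0 : ℝ) 1, (∀ k < n, bit k x = s k) ↔ ⌊x * 2 ^ n⌋ = m := by
  induction n with
  | zero => exact ⟨0, le_rfl, by simp, fun x hx => by simp [Int.floor_eq_zero_iff, hx.1, hx.2]⟩
  | succ n ih =>
    obtain ⟨m, hm0, hm1, hm⟩ := ih
    refine ⟨2 * m + if s n then 1 else 0, ?_, ?_, fun x hx => ?_⟩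
    · split_ifs <;> omega
    · rw [pow_succ]
      split_ifs <;> omega
    · have hhalf : ⌊x * 2 ^ (n + 1)⌋ / 2 = ⌊x * 2 ^ n⌋ := by
        rw [pow_succ, ← mul_assoc]
        exact Int.mul_natCast_floor_div_cancel two_ne_zero (x * 2 ^ n)
      rw [Nat.forall_lt_succ_right, hm x hx, bit_eq_iff, ← hhalf]
      split_ifs <;> omega

lemma setOf_forall_bit_eq_inter_Ico (s : ℕ → Bool) (n : ℕ) : ∃ m : ℤ,
    {x | ∀ k < n, bit k x = s k} ∩ Set.Ico 0 1 = Set.Ico ((m : ℝ) / 2 ^ n) ((m + 1) / 2 ^ n) := by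
  obtain ⟨m, hm0, hm1, hm⟩ := exists_forall_bit_eq_iff_floor_eq s n
  have hpos : (0 : ℝ) < 2 ^ n := by positivity
  have hsub : Set.Ico ((m : ℝ) / 2 ^ n) ((m + 1) / 2 ^ n) ⊆ Set.Ico 0 1 := by
    refine Set.Ico_subset_Ico (div_nonneg (by exact_mod_cast hm0) hpos.le) ?_
    exact (div_le_one hpos).2 (by exact_mod_cast hm1)
  refine ⟨m, Set.ext fun x => ?_⟩
  rw [← and_iff_left_of_imp (@hsub x)]
  refine and_congr_left fun hx => (hm x hx).trans ?_
  rw [Int.floor_eq_iff, Set.mem_Ico, div_le_iff₀ hpos, lt_div_iff₀ hpos]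

lemma measurable_bit (n : ℕ) : Measurable (bit n) :=
  (measurable_of_countable fun z : ℤ => boolOf (z % 2 = 1)).comp
    (Int.measurable_floor.comp (measurable_id.mul_const _))

lemma base_setOf_forall_bit_eq (s : ℕ → Bool) (n : ℕ) :
    base {x | ∀ k < n, bit k x = s k} = 2⁻¹ ^ n := by
  have hmeas : MeasurableSet {x | ∀ k < n, bit k x = s k} := by
    simp only [Set.ofPred_forall]
    exact .iInter fun k => .iInter fun _ => measurable_bit k (measurableSet_singleton _)
  obtain ⟨m, hm⟩ := setOf_forall_bit_eq_inter_Ico s n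
  have hlen : ((m : ℝ) + 1) / 2 ^ n - m / 2 ^ n = 2⁻¹ ^ n := by
    rw [inv_pow]
    ring
  rw [base, ← Measure.restrict_congr_set Ico_ae_eq_Ioc, Measure.restrict_apply hmeas, hm,
    Real.volume_Ico, hlen, ENNReal.ofReal_pow (by norm_num), ENNReal.ofReal_inv_of_pos two_pos,
    ENNReal.ofReal_ofNat]

/-- The parameter `1 / 2` of a fair coin. -/
noncomputable def half : I := ⟨2⁻¹, by norm_num, by norm_num⟩

/-- The law of a sequence of independent fair coin tosses. -/
noncomputable def fairCoins : Measure (ℕ → Bool) := bernoulliProduct fun _ => half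

instance : IsProbabilityMeasure fairCoins := by unfold fairCoins; infer_instance

lemma bernoulliMeasure_half_singleton (b : Bool) :
    bernoulliMeasure true false half {b} = 2⁻¹ := by
  rw [← ENNReal.toReal_eq_toReal_iff' (measure_ne_top _ _) (by simp), ← measureReal_def]
  cases b
  · rw [bernoulliMeasure_real_apply_of_notMem_of_mem _ .of_discrete (by simp) (by simp)]
    norm_num [half]
  · rw [bernoulliMeasure_real_true]
    simp [half]

lemma map_base_bit : base.map (fun x n => bit n x) = fairCoins := by
  have : IsFiniteMeasure base := ⟨by simp [base]⟩
  have hbits : Measurable fun x n => bit n x := measurable_pi_iff.2 measurable_bit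
  refine IsProjectiveLimit.unique ((isProjectiveLimit_nat_iff (isProjectiveMeasureFamily_pi
    fun _ => bernoulliMeasure true false half) _).2 fun n => ?_)
    (Measure.isProjectiveLimit_infinitePi fun _ => bernoulliMeasure true false half)
  rw [Measure.map_map (Preorder.measurable_frestrictLe n) hbits, Measure.ext_iff_singleton]
  intro s
  rw [Measure.map_apply ((Preorder.measurable_frestrictLe n).comp hbits)
    (measurableSet_singleton _), Measure.pi_singleton]
  simp only [bernoulliMeasure_half_singleton, Finset.prod_const, Finset.card_univ,
    Fintype.card_coe, Nat.card_Iic]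
  rw [← base_setOf_forall_bit_eq (fun k => if h : k ∈ Finset.Iic n then s ⟨k, h⟩ else true)]
  congr 1
  ext x
  simp only [Set.mem_preimage, Set.mem_singleton_iff, funext_iff, Subtype.forall,
    Set.mem_ofPred_eq, Finset.mem_Iic, Nat.lt_succ_iff]
  refine forall₂_congr fun k hk => ?_
  rw [dif_pos hk]
  rfl

lemma coe_finTwoEquiv_symm (b : Bool) :
    ((finTwoEquiv.symm b : Fin 2) : ℝ) = if b then 1 else 0 := by
  cases b <;> simp [finTwoEquiv]

lemma coe_fromBinary (z : ℕ → Bool) :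
    (Real.fromBinary z : ℝ) = ∑' k, if z k then (2 : ℝ)⁻¹ ^ (k + 1) else 0 := by
  refine tsum_congr fun k => ?_
  change ((finTwoEquiv.symm (z k) : Fin 2) : ℝ) * ((2 : ℝ) ^ (k + 1))⁻¹ = _
  rw [coe_finTwoEquiv_symm, ite_mul, one_mul, zero_mul, inv_pow]

lemma half_le_fromBinary {z : ℕ → Bool} (hz : z 0 = true) : (1 / 2 : ℝ) ≤ Real.fromBinary z := by
  let digits : ℕ → Fin 2 := fun k => finTwoEquiv.symm (z k)
  have hsum : (Real.fromBinary z : ℝ) = ∑' k, Real.ofDigitsTerm digits k := rfl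
  have hle := Real.summable_ofDigitsTerm.le_tsum 0 fun k _ =>
    Real.ofDigitsTerm_nonneg (digits := digits) (n := k)
  have hfirst : Real.ofDigitsTerm digits 0 = 1 / 2 := by
    simp [Real.ofDigitsTerm, digits, hz, coe_finTwoEquiv_symm]
  rwa [hsum, ← hfirst]

lemma measurable_fromBinary : Measurable fun z => (Real.fromBinary z : ℝ) :=
  (continuous_subtype_val.comp Real.fromBinary_continuous).measurable

lemma unif_eq_fromBinary (i : ℕ) (x : ℝ) :
    unif i x = Real.fromBinary fun k => bit (Nat.pair i k) x :=
  (coe_fromBinary _).symm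

/-- The probability that a real number with independent fair binary digits is less than `t`,
which is `t` for `t` in the unit interval. -/
noncomputable def probLT (t : ℝ) : I :=
  ⟨fairCoins.real {z | (Real.fromBinary z : ℝ) < t}, measureReal_nonneg, measureReal_le_one⟩

lemma probLT_le_half {t : ℝ} (ht : t ≤ 1 / 2) : (probLT t : ℝ) ≤ 1 / 2 := by
  have hsub : {z | (Real.fromBinary z : ℝ) < t} ⊆ (fun z : ℕ → Bool => z 0) ⁻¹' {false} :=
    fun z hz => Bool.eq_false_iff.2 fun h0 => (ht.trans (half_le_fromBinary h0)).not_gt hz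
  have hfirst : fairCoins.real ((fun z : ℕ → Bool => z 0) ⁻¹' {false}) = 1 / 2 := by
    rw [measureReal_def, ← Measure.map_apply (measurable_pi_apply 0) .of_discrete, fairCoins,
      bernoulliProduct, Measure.infinitePi_map_eval, bernoulliMeasure_half_singleton]
    simp
  exact (measureReal_mono hsub).trans hfirst.le

lemma measurable_boolOf_fromBinary_lt (t : ℝ) :
    Measurable fun z => boolOf ((Real.fromBinary z : ℝ) < t) :=
  (measurable_of_finite boolOf).comp
    (measurableSet_setOfPred.1 (measurableSet_lt measurable_fromBinary measurable_const))

lemma map_fairCoins_boolOf_fromBinary_lt (t : ℝ) :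
    fairCoins.map (fun z => boolOf ((Real.fromBinary z : ℝ) < t)) =
      bernoulliMeasure true false (probLT t) := by
  have hmeas := measurable_boolOf_fromBinary_lt t
  have := Measure.isProbabilityMeasure_map (μ := fairCoins) hmeas.aemeasurable
  refine eq_bernoulliMeasure_of_real_true _ ?_
  rw [map_measureReal_apply hmeas .of_discrete]
  simp only [Set.preimage, Set.mem_singleton_iff, boolOf_eq_true_iff, probLT]

variable {ι : Type*} {f : ι → ℕ}

lemma map_fairCoins_pair (hf : Function.Injective f) :
    fairCoins.map (fun z i k => z (Nat.pair (f i) k)) =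
      Measure.infinitePi fun _ : ι => fairCoins := by
  have hinj : Function.Injective fun a : ι × ℕ => Nat.pair (f a.1) a.2 := fun a a' h =>
    Prod.ext (hf (Nat.pair_eq_pair.1 h).1) (Nat.pair_eq_pair.1 h).2
  have hcomp := bernoulliProduct_map_comp (fun _ => half) hinj
  have hcurry := Measure.infinitePi_map_curry fun (_ : ι) (_ : ℕ) =>
    bernoulliMeasure true false half
  refine Eq.trans ?_ ((congrArg (Measure.map (MeasurableEquiv.curry ι ℕ Bool)) hcomp).trans hcurry)
  rw [Measure.map_map (MeasurableEquiv.measurable _) (measurable_comp_index _)]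
  rfl

lemma map_base_boolOf_unif_lt (hf : Function.Injective f) (t : ι → ℝ) :
    base.map (fun x i => boolOf (unif (f i) x < t i)) = bernoulliProduct fun i => probLT (t i) := by
  have hbits : Measurable fun x n => bit n x := measurable_pi_iff.2 measurable_bit
  have hpair : Measurable fun (z : ℕ → Bool) i k => z (Nat.pair (f i) k) :=
    measurable_pi_iff.2 fun _ => measurable_pi_iff.2 fun _ => measurable_pi_apply _
  have hthr : Measurable fun (z : ι → ℕ → Bool) i => boolOf ((Real.fromBinary (z i) : ℝ) < t i) :=
    measurable_pi_iff.2 fun i =>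
      (measurable_boolOf_fromBinary_lt (t i)).comp (measurable_pi_apply i)
  simp only [unif_eq_fromBinary]
  simp only [bernoulliProduct, ← map_fairCoins_boolOf_fromBinary_lt]
  rw [← Measure.infinitePi_map_pi (f := fun i z => boolOf ((Real.fromBinary z : ℝ) < t i)) _
    fun i => measurable_boolOf_fromBinary_lt (t i), ← map_fairCoins_pair hf, ← map_base_bit,
    Measure.map_map hpair hbits, Measure.map_map hthr (hpair.comp hbits)]
  rfl

lemma eIdx_comm (u v : V) : eIdx u v = eIdx v u := min_comm _ _

lemma eq_or_eq_of_eIdx_eq {u v u' v' : V} (h : eIdx u v = eIdx u' v') :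
    u = u' ∧ v = v' ∨ u = v' ∧ v = u' := by
  unfold eIdx at h
  rcases min_choice (Encodable.encode (u, v)) (Encodable.encode (v, u)) with h₁ | h₁ <;>
  rcases min_choice (Encodable.encode (u', v')) (Encodable.encode (v', u')) with h₂ | h₂ <;>
  rw [h₁, h₂] at h <;> have h₃ := Encodable.encode_injective h <;>
  simp only [Prod.mk.injEq] at h₃ <;> tauto

/-- The index of the uniform variable that decides whether a bond is open or the colour of a
representative. -/
noncomputable def labelIdx : Bond ⊕ V → ℕ :=
  Sum.elim (fun e => 2 * eIdx e.1 (bondEnd e)) fun v => 2 * Encodable.encode v + 1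

lemma labelIdx_injective : Function.Injective labelIdx := by
  refine Function.Injective.sumElim (fun e e' h => ?_) (fun v v' h => ?_) fun e v => by omega
  · rw [← bondOf_bondEnd e, ← bondOf_bondEnd e']
    rcases eq_or_eq_of_eIdx_eq (Nat.eq_of_mul_eq_mul_left two_pos h) with ⟨h₁, h₂⟩ | ⟨h₁, h₂⟩
    · rw [h₁, h₂]
    · rw [h₁, h₂, bondOf_comm]
  · exact Encodable.encode_injective (by simpa using h)

/-- The open bonds and the colours of the representatives determined by the uniform sample `x`. -/
noncomputable def labels (p r x : ℝ) (i : Bond ⊕ V) : Bool :=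
  boolOf (unif (labelIdx i) x < Sum.elim (fun _ => p) (fun _ => r) i)

lemma map_base_labels (p r : ℝ) : base.map (labels p r) =
    bernoulliProduct (Sum.elim (fun _ => probLT p) fun _ => probLT r) := by
  refine (map_base_boolOf_unif_lt labelIdx_injective _).trans (congrArg bernoulliProduct ?_)
  funext i
  cases i <;> rfl

lemma edgeCfg_eq_bondCfg (p r x : ℝ) : edgeCfg SqAdj p x = bondCfg (labels p r x ∘ Sum.inl) := by
  funext u v
  rw [Bool.eq_iff_iff, bondCfg_eq_true_iff, edgeCfg, Bool.and_eq_true, boolOf_eq_true_iff]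
  refine and_congr_right fun huv => ?_
  have hidx : eIdx (bondOf u v).1 (bondEnd (bondOf u v)) = eIdx u v := by
    rcases huv.eq_bondEnd_or with ⟨hu, hv⟩ | ⟨hv, hu⟩
    · rw [← hu, ← hv]
    · rw [← hu, ← hv, eIdx_comm]
  simp only [Function.comp_apply, labels, labelIdx, Sum.elim_inl, hidx, edgeU]

lemma colourCfg_eq_jointColour (p r x : ℝ) :
    colourCfg SqAdj p r x = jointColour (labels p r x) := by
  funext v
  rw [colourCfg, edgeCfg_eq_bondCfg p r]
  rfl

lemma measurable_labels (p r : ℝ) : Measurable (labels p r) := by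
  refine measurable_pi_iff.2 fun i => ?_
  simp only [labels, unif_eq_fromBinary]
  exact (measurable_boolOf_fromBinary_lt _).comp (measurable_pi_iff.2 fun _ => measurable_bit _)

lemma measurable_bondCfg : Measurable bondCfg :=
  measurable_pi_iff.2 fun a => measurable_pi_iff.2 fun b =>
    (measurable_of_finite (boolOf (SqAdj a b) && ·)).comp (measurable_pi_apply (bondOf a b))

lemma measurable_bondCfg_jointColour :
    Measurable fun b => (bondCfg (b ∘ Sum.inl), jointColour b) :=
  (measurable_bondCfg.comp (measurable_comp_index _)).prodMk measurable_jointColour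

lemma DaCMeasure_eq_map (p r : ℝ) : DaCMeasure SqAdj p r =
    (bernoulliProduct (Sum.elim (fun _ => probLT p) fun _ => probLT r)).map
      fun b => (bondCfg (b ∘ Sum.inl), jointColour b) := by
  rw [← map_base_labels, Measure.map_map measurable_bondCfg_jointColour (measurable_labels p r),
    DaCMeasure]
  simp only [edgeCfg_eq_bondCfg p r, colourCfg_eq_jointColour]
  rfl

lemma frequently_hasInfiniteCluster_of_percProb_ne_zero {adj : LatticeRel} {c : Bool} {p r : ℝ}
    (h : percProb SqAdj adj c p r ≠ 0) :
    ∃ᵐ b ∂bernoulliProduct (Sum.elim (fun _ => probLT p) fun _ => probLT r),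
      HasInfiniteCluster (within adj {v | jointColour b v = c}) 0 := by
  have hcluster : Measurable fun ω : Config => HasInfiniteCluster (within adj {v | ω.2 v = c}) 0 :=
    (measurable_hasInfiniteCluster 0).comp ((measurable_within_colour adj c).comp measurable_snd)
  rw [percProb, DaCMeasure_eq_map, ← frequently_ae_mem_iff] at h
  exact (frequently_ae_map_iff measurable_bondCfg_jointColour hcluster).1
    (h.mono fun ω hω => hω.mono fun _ hw => hw.2)

end Sample

/-! ### The critical densities -/

theorem rc_add_rcStar_ge_one_general (p : ℝ) (hp : p ≤ 1 / 2) : 1 ≤ rcSq p + rcStarSq p := by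
  by_contra! hlt
  have hrc : 0 ≤ rcSq p := Real.sSup_nonneg fun r hr => hr.1.1
  have hrcStar : 0 ≤ rcStarSq p := Real.sSup_nonneg fun s hs => hs.1.1
  obtain ⟨r, hr, hr'⟩ := exists_between (lt_sub_iff_add_lt.2 hlt)
  have hblack : thetaSq p r ≠ 0 := fun h =>
    hr.not_ge (le_csSup ⟨1, fun s hs => hs.1.2⟩ ⟨⟨by linarith, by linarith⟩, h⟩)
  have hwhite : thetaStarSq p (1 - r) ≠ 0 := fun h => (lt_sub_comm.1 hr').not_ge
    (le_csSup ⟨1, fun s hs => hs.1.2⟩ ⟨⟨by linarith, by linarith⟩, h⟩)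
  rw [thetaStarSq, sub_sub_self] at hwhite
  refine frequently_hasInfiniteCluster_of_percProb_ne_zero hwhite ?_
  filter_upwards [ae_not_percolates_whiteRel (probLT_le_half hp)
    (frequently_hasInfiniteCluster_of_percProb_ne_zero hblack)] with b hb hinf
  exact hb ⟨0, hinf⟩

/-- For every `p < 1/2`, `r_c(p) + r_c*(p) ≥ 1`. -/
theorem rc_add_rcStar_ge_one (p : ℝ) (hp0 : 0 ≤ p) (hp : p < 1 / 2) :
    1 ≤ rcSq p + rcStarSq p :=
  rc_add_rcStar_ge_one_general p hp.le

end DaC
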